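/- arXiv:math/0509477 — 2 statements merged into one kernel-verified Lean document; each statement's English description precedes it below -/
import Mathlib

section
/- Let H > 0, let Ω ⊆ ℝ² be an open connected set, and let (u_n) be a sequence of C^∞ solutions of (CMC) on Ω. Let P ∈ B(u_n) and let C be the connected component of the convergence domain B(u_n) containing P. Then there exist a strictly increasing map φ : ℕ → ℕ and a C^∞ solution u of (CMC) on C such that the sequence (u_{φ(n)} − u_{φ(n)}(P)) converges to u uniformly on every compact subset of C, together with all of its partial derivatives. -/
/-!
The proof uses nothing beyond the maximum principle, in three stages.

*Curvature and gradient.*  Let `W = √(1 + |∇u|²)` and let `Z = H² - K`, where `K` is the Gauss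
curvature of the graph of a solution `u`.  On the graph, `1/W` satisfies the Jacobi equation and
`log Z` satisfies `Δ log Z = 4K` where `Z > 0`.  Together they give a lower bound for the Laplacian
of `log (Z (1 + 1/W)⁻⁶)` which grows linearly in `Z` (`alg_lower`).  Adding `2 log η` with a
quadratic cut-off `η` and looking at a maximum point (`curvature_at_max`) yields an interior bound
for `Z` depending only on `H` and the distance to the boundary (`curvature_est`).  A bound for `Z`
bounds `|D²u|` by a multiple of `W³`, so that `1/W²` is Lipschitz with a controlled constant: a
bound for `W` at one point propagates, together with a bound for the Hessian, to a neighbourhood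
whose size does not depend on the solution (`grad_hess_bound`).  In particular the convergence
domain is open.

*Higher derivatives.*  With `L = a^{ij}(∇u) ∂_{ij}` the linear operator of the equation, a bounded
finite family `w` satisfying `|L w| ≤ C (1 + |∇w|)` and `|∂ L w| ≤ C (1 + |∇w|² + |D²w|)` has an
interior gradient bound, by Bernstein's method: at a maximum of `η² |∇w|² (K + |w|²)` with `K`
large, the term `|∇w|²` in `L |w|²` dominates (`bernstein`).  The family of all derivatives of `u`
of a fixed order `m ≥ 2` satisfies such inequalities: `L (D^α u)` is a polynomial in `1/W` and the
derivatives of `u`, and a weight count (`Wt`, `Lop_D`) gives the growth.  Induction on `m`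
(`order_step`, `all_orders`) bounds all derivatives near each point of the convergence domain.

*Compactness.*  The functions `u_n - u_n(P)` are locally bounded on the component of `P` because it
is connected (`LB_normalised`).  A diagonal extraction on a countable dense set and the
equi-Lipschitz property make all partial derivatives of a subsequence converge locally uniformly
(`compactness`); the Fréchet derivatives are linear combinations of the partial ones
(`iterated_eq`), and the equation passes to the limit (`isSol_limit`).
-/

open Real MeasureTheory Filter Set

noncomputable section

/-- Euclidean norm on `ℝ × ℝ`. -/
def enorm2 (p : ℝ × ℝ) : ℝ := Real.sqrt (p.1 ^ 2 + p.2 ^ 2)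

/-- Partial derivative in the `x` direction. -/
def pdx (u : ℝ × ℝ → ℝ) (p : ℝ × ℝ) : ℝ := fderiv ℝ u p (1, 0)

/-- Partial derivative in the `y` direction. -/
def pdy (u : ℝ × ℝ → ℝ) (p : ℝ × ℝ) : ℝ := fderiv ℝ u p (0, 1)

/-- The area element `W_u = √(1 + |∇u|²)`. -/
def Wgraph (u : ℝ × ℝ → ℝ) (p : ℝ × ℝ) : ℝ :=
  Real.sqrt (1 + (pdx u p) ^ 2 + (pdy u p) ^ 2)

/-- Upward unit normal of the graph of `u`. -/
def normalVec (u : ℝ × ℝ → ℝ) (p : ℝ × ℝ) : ℝ × ℝ × ℝ :=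
  (-pdx u p / Wgraph u p, -pdy u p / Wgraph u p, 1 / Wgraph u p)

/-- `u` is a (C²) solution of the constant mean curvature `H` equation on `Ω`. -/
def IsCMCSolution (H : ℝ) (Ω : Set (ℝ × ℝ)) (u : ℝ × ℝ → ℝ) : Prop :=
  ContDiffOn ℝ 2 u Ω ∧ ∀ p ∈ Ω,
    (1 + (pdy u p) ^ 2) * pdx (fun q => pdx u q) p
      - 2 * (pdx u p) * (pdy u p) * pdy (fun q => pdx u q) p
      + (1 + (pdx u p) ^ 2) * pdy (fun q => pdy u q) p
    = 2 * H * (1 + (pdx u p) ^ 2 + (pdy u p) ^ 2) ^ ((3 : ℝ) / 2)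

/-- `C` is a divergence line of the sequence `u` on `Ω`. -/
def IsDivergenceLine (H : ℝ) (Ω : Set (ℝ × ℝ)) (u : ℕ → ℝ × ℝ → ℝ)
    (C : Set (ℝ × ℝ)) : Prop :=
  ∃ z₁ : ℝ × ℝ, C ⊆ Ω ∧ (∀ q ∈ C, enorm2 (q - z₁) = 1 / (2 * H)) ∧
    IsConnected C ∧ C.Nontrivial ∧
    ∃ φ : ℕ → ℕ, StrictMono φ ∧ ∀ Q ∈ C,
      Tendsto (fun n => normalVec (u (φ n)) Q) atTop
        (nhds (2 * H * (z₁.1 - Q.1), 2 * H * (z₁.2 - Q.2), 0))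

/-- `u` is a smooth (C^∞) solution of the CMC `H` equation on `Ω`. -/
def IsSmoothCMCSolution (H : ℝ) (Ω : Set (ℝ × ℝ)) (u : ℝ × ℝ → ℝ) : Prop :=
  ContDiffOn ℝ (⊤ : ℕ∞) u Ω ∧ ∀ p ∈ Ω,
    (1 + (pdy u p) ^ 2) * pdx (fun q => pdx u q) p
      - 2 * (pdx u p) * (pdy u p) * pdy (fun q => pdx u q) p
      + (1 + (pdx u p) ^ 2) * pdy (fun q => pdy u q) p
    = 2 * H * (1 + (pdx u p) ^ 2 + (pdy u p) ^ 2) ^ ((3 : ℝ) / 2)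

namespace CMC
open scoped Topology ContDiff

/-! ### Directional derivatives of smooth functions on an open set -/

/-- Directional derivative of `f` in the (constant) direction `e`. -/
def dd (e : ℝ × ℝ) (f : ℝ × ℝ → ℝ) (x : ℝ × ℝ) : ℝ := fderiv ℝ f x e

/-- Smoothness of a scalar function on a set. -/
def Sm (U : Set (ℝ × ℝ)) (f : ℝ × ℝ → ℝ) : Prop := ContDiffOn ℝ ∞ f U

variable {U : Set (ℝ × ℝ)} {f g : ℝ × ℝ → ℝ} {x e e' : ℝ × ℝ}

lemma Sm.cda (hf : Sm U f) (hU : IsOpen U) (hx : x ∈ U) : ContDiffAt ℝ ∞ f x :=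
  hf.contDiffAt (hU.mem_nhds hx)

lemma Sm.diff (hf : Sm U f) (hU : IsOpen U) (hx : x ∈ U) : DifferentiableAt ℝ f x :=
  (hf.cda hU hx).differentiableAt (by simp)

lemma Sm.dd (hf : Sm U f) (hU : IsOpen U) (e : ℝ × ℝ) : Sm U (dd e f) := by
  have h : ContDiffOn ℝ ∞ (fderiv ℝ f) U :=
    hf.fderiv_of_isOpen hU (by simp)
  exact h.clm_apply contDiffOn_const

lemma Sm.add (hf : Sm U f) (hg : Sm U g) : Sm U (fun x => f x + g x) := ContDiffOn.add hf hg
lemma Sm.sub (hf : Sm U f) (hg : Sm U g) : Sm U (fun x => f x - g x) := ContDiffOn.sub hf hg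
lemma Sm.mul (hf : Sm U f) (hg : Sm U g) : Sm U (fun x => f x * g x) := ContDiffOn.mul hf hg
lemma Sm.const (c : ℝ) : Sm U (fun _ => c) := contDiffOn_const
lemma Sm.pow (hf : Sm U f) (n : ℕ) : Sm U (fun x => f x ^ n) := ContDiffOn.pow hf n
lemma Sm.sum {ι : Type*} {s : Finset ι} {F : ι → ℝ × ℝ → ℝ} (h : ∀ i ∈ s, Sm U (F i)) :
    Sm U (fun x => ∑ i ∈ s, F i x) := ContDiffOn.sum h
lemma Sm.inv (hf : Sm U f) (h : ∀ x ∈ U, f x ≠ 0) : Sm U (fun x => (f x)⁻¹) := ContDiffOn.inv hf h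
lemma Sm.sqrt (hf : Sm U f) (h : ∀ x ∈ U, f x ≠ 0) : Sm U (fun x => √(f x)) :=
  ContDiffOn.sqrt hf h
lemma Sm.mono {V : Set (ℝ × ℝ)} (hf : Sm U f) (h : V ⊆ U) : Sm V f := ContDiffOn.mono hf h
lemma Sm.congr (hf : Sm U f) (h : ∀ x ∈ U, g x = f x) : Sm U g := ContDiffOn.congr hf h

lemma dd_congr (hU : IsOpen U) (h : ∀ x ∈ U, f x = g x) (hx : x ∈ U) : dd e f x = dd e g x := by
  have : f =ᶠ[𝓝 x] g := by filter_upwards [hU.mem_nhds hx] with y hy using h y hy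
  simp only [dd, this.fderiv_eq]

lemma dd_add (hf : DifferentiableAt ℝ f x) (hg : DifferentiableAt ℝ g x) :
    dd e (fun x => f x + g x) x = dd e f x + dd e g x := by
  simp only [dd, fderiv_fun_add hf hg]; rfl

lemma dd_sub (hf : DifferentiableAt ℝ f x) (hg : DifferentiableAt ℝ g x) :
    dd e (fun x => f x - g x) x = dd e f x - dd e g x := by
  simp only [dd, fderiv_fun_sub hf hg]; rfl

lemma dd_mul (hf : DifferentiableAt ℝ f x) (hg : DifferentiableAt ℝ g x) :
    dd e (fun x => f x * g x) x = dd e f x * g x + f x * dd e g x := by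
  simp only [dd, fderiv_fun_mul hf hg]; simp; ring

lemma dd_const (c : ℝ) : dd e (fun _ => c) x = 0 := by simp [dd]

lemma dd_lin (a b : ℝ) : dd (a • e + b • e') f x = a * dd e f x + b * dd e' f x := by
  simp [dd]

lemma dd_comm (hU : IsOpen U) (hf : Sm U f) (hx : x ∈ U) :
    dd e (dd e' f) x = dd e' (dd e f) x := by
  have h1 : ContDiffAt ℝ 2 f x := (hf.cda hU hx).of_le (WithTop.coe_le_coe.2 le_top)
  have h2 : DifferentiableAt ℝ (fderiv ℝ f) x :=
    (h1.fderiv_right (m := 1) (by norm_num)).differentiableAt (by norm_num)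
  have h3 : ∀ a b : ℝ × ℝ, dd a (dd b f) x = fderiv ℝ (fderiv ℝ f) x a b := by
    intro a b
    change fderiv ℝ (fun y => fderiv ℝ f y b) x a = _
    rw [fderiv_clm_apply h2 (differentiableAt_const b)]
    simp
  rw [h3, h3]
  exact (h1.isSymmSndFDerivAt (by simp)).eq _ _

/-! ### Second order jets along a line -/

/-- `F` has value `a`, first derivative `b` and second derivative `c` at the origin. -/
def J (F : ℝ → ℝ) (a b c : ℝ) : Prop :=
  F 0 = a ∧ ∃ g : ℝ → ℝ, g 0 = b ∧ (∀ᶠ t in 𝓝 0, HasDerivAt F (g t) t) ∧ HasDerivAt g c 0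

variable {F G : ℝ → ℝ} {a b c a' b' c' : ℝ}

lemma J.unique (h : J F a b c) (h' : J F a' b' c') : a = a' ∧ b = b' ∧ c = c' := by
  obtain ⟨h1, g, h2, h3, h4⟩ := h
  obtain ⟨h1', g', h2', h3', h4'⟩ := h'
  have hg : g =ᶠ[𝓝 0] g' := by
    filter_upwards [h3, h3'] with t ht ht' using ht.unique ht'
  refine ⟨h1 ▸ h1', ?_, ?_⟩
  · rw [← h2, ← h2', hg.eq_of_nhds]
  · exact h4.unique (h4'.congr_of_eventuallyEq hg)

lemma J.congr (h : J F a b c) (hG : G =ᶠ[𝓝 0] F) : J G a b c := by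
  obtain ⟨h1, g, h2, h3, h4⟩ := h
  refine ⟨hG.eq_of_nhds.trans h1, g, h2, ?_, h4⟩
  filter_upwards [h3, hG.eventuallyEq_nhds] with t ht hGt using ht.congr_of_eventuallyEq hGt

lemma J.eq (h : J F a b c) (h1 : a = a') (h2 : b = b') (h3 : c = c') : J F a' b' c' := by
  subst h1 h2 h3; exact h

lemma J.const (k : ℝ) : J (fun _ => k) k 0 0 :=
  ⟨rfl, fun _ => 0, rfl, Eventually.of_forall fun t => hasDerivAt_const t k, hasDerivAt_const 0 0⟩

lemma J.add (h : J F a b c) (h' : J G a' b' c') :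
    J (fun t => F t + G t) (a + a') (b + b') (c + c') := by
  obtain ⟨h1, g, h2, h3, h4⟩ := h
  obtain ⟨h1', g', h2', h3', h4'⟩ := h'
  refine ⟨by simp only [h1, h1'], fun t => g t + g' t, by simp only [h2, h2'], ?_, h4.add h4'⟩
  filter_upwards [h3, h3'] with t ht ht' using ht.add ht'

lemma J.sub (h : J F a b c) (h' : J G a' b' c') :
    J (fun t => F t - G t) (a - a') (b - b') (c - c') := by
  obtain ⟨h1, g, h2, h3, h4⟩ := h
  obtain ⟨h1', g', h2', h3', h4'⟩ := h'
  refine ⟨by simp only [h1, h1'], fun t => g t - g' t, by simp only [h2, h2'], ?_, h4.sub h4'⟩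
  filter_upwards [h3, h3'] with t ht ht' using ht.sub ht'

lemma J.mul (h : J F a b c) (h' : J G a' b' c') :
    J (fun t => F t * G t) (a * a') (b * a' + a * b') (c * a' + 2 * b * b' + a * c') := by
  obtain ⟨h1, g, h2, h3, h4⟩ := h
  obtain ⟨h1', g', h2', h3', h4'⟩ := h'
  refine ⟨by simp only [h1, h1'], fun t => g t * G t + F t * g' t, by simp only [h1, h1', h2, h2'], ?_, ?_⟩
  · filter_upwards [h3, h3'] with t ht ht' using ht.mul ht'
  · have := (h4.mul h3'.self_of_nhds).add (h3.self_of_nhds.mul h4')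
    refine this.congr_deriv ?_
    simp only [h1, h1', h2, h2']; ring

lemma J.smul (k : ℝ) (h : J F a b c) : J (fun t => k * F t) (k * a) (k * b) (k * c) :=
  ((J.const k).mul h).eq rfl (by ring) (by ring)

lemma J.sum {ι : Type*} {s : Finset ι} {F : ι → ℝ → ℝ} {a b c : ι → ℝ}
    (h : ∀ i ∈ s, J (F i) (a i) (b i) (c i)) :
    J (fun t => ∑ i ∈ s, F i t) (∑ i ∈ s, a i) (∑ i ∈ s, b i) (∑ i ∈ s, c i) := by
  classical
  induction s using Finset.induction_on with
  | empty => simpa using J.const 0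
  | insert i s hi ih =>
    simp only [Finset.sum_insert hi]
    exact (h i (by simp)).add (ih fun j hj => h j (by simp [hj]))

lemma J.log (h : J F a b c) (ha : 0 < a) :
    J (fun t => Real.log (F t)) (Real.log a) (b / a) (c / a - (b / a) ^ 2) := by
  obtain ⟨h1, g, h2, h3, h4⟩ := h
  have hc : ContinuousAt F 0 := h3.self_of_nhds.continuousAt
  have hpos : ∀ᶠ t in 𝓝 0, 0 < F t := hc.eventually (lt_mem_nhds (by rw [h1]; exact ha))
  refine ⟨by simp only [h1], fun t => g t / F t, by simp only [h1, h2], ?_, ?_⟩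
  · filter_upwards [h3, hpos] with t ht hp using ht.log hp.ne'
  · have := h4.div h3.self_of_nhds (by rw [h1]; exact ha.ne')
    refine this.congr_deriv ?_
    simp only [h1, h2]; field_simp

/-- Necessary conditions of first and second order at a local maximum. -/
lemma J.max (h : J F a b c) (hm : IsLocalMax F 0) : b = 0 ∧ c ≤ 0 := by
  obtain ⟨h1, g, h2, h3, h4⟩ := id h
  have hb : b = 0 := by rw [← h2]; exact hm.hasDerivAt_eq_zero h3.self_of_nhds
  refine ⟨hb, ?_⟩
  by_contra! hc
  have hd : deriv F =ᶠ[𝓝 0] g := by filter_upwards [h3] with t ht using ht.deriv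
  have hmin : IsLocalMin F 0 := by
    apply isLocalMin_of_deriv_deriv_pos
    · rw [hd.deriv_eq, h4.deriv]; exact hc
    · rw [hd.eq_of_nhds, h2, hb]
    · exact h3.self_of_nhds.continuousAt
  have hconst : F =ᶠ[𝓝 0] fun _ => F 0 := by
    filter_upwards [hm, hmin] with t h5 h6 using le_antisymm h5 h6
  have := (h.unique ((J.const (F 0)).congr hconst)).2.2
  linarith

lemma hasDerivAt_line (v : ℝ × ℝ) (t : ℝ) (hf : DifferentiableAt ℝ f (x + t • v)) :
    HasDerivAt (fun t : ℝ => f (x + t • v)) (dd v f (x + t • v)) t := by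
  have h1 : HasDerivAt (fun t : ℝ => x + t • v) v t := by
    simpa using ((hasDerivAt_id t).smul_const v).const_add x
  exact hf.hasFDerivAt.comp_hasDerivAt t h1

lemma eventually_line (hU : IsOpen U) (hx : x ∈ U) (v : ℝ × ℝ) :
    ∀ᶠ t : ℝ in 𝓝 0, x + t • v ∈ U := by
  have : ContinuousAt (fun t : ℝ => x + t • v) 0 := by fun_prop
  exact this.eventually (hU.mem_nhds (by simpa using hx))

lemma Sm.J (hf : Sm U f) (hU : IsOpen U) (hx : x ∈ U) (v : ℝ × ℝ) :
    J (fun t : ℝ => f (x + t • v)) (f x) (CMC.dd v f x) (CMC.dd v (CMC.dd v f) x) := by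
  refine ⟨by simp, fun t => CMC.dd v f (x + t • v), by simp, ?_, ?_⟩
  · filter_upwards [eventually_line hU hx v] with t ht
    exact hasDerivAt_line v t (hf.diff hU ht)
  · have := hasDerivAt_line (x := x) v 0 ((hf.dd hU v).diff hU (x := x + (0 : ℝ) • v) (by simpa using hx))
    simpa using this

lemma isLocalMax_line (h : IsLocalMax f x) (v : ℝ × ℝ) :
    IsLocalMax (fun t : ℝ => f (x + t • v)) 0 := by
  have h0 : ContinuousAt (fun t : ℝ => x + t • v) 0 := by fun_prop
  have h1 : Tendsto (fun t : ℝ => x + t • v) (𝓝 0) (𝓝 x) := by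
    simpa [ContinuousAt] using h0
  have := h1.eventually h
  simpa [IsLocalMax, IsMaxFilter] using this

end CMC

namespace CMC
open scoped Topology ContDiff

/-! ### Pointwise algebra behind the curvature estimate -/

/-- The differential identities for `W` and for the squared norm of the traceless second fundamental
form, in normalised jet variables.  At a point where `q = 0` one has `r = W³(H+α)`, `s = W²β`,
`t = W(H-α)`; the third derivatives are normalised to `A`, `B` in the same way.  The first
conclusion is the Jacobi equation for `1/W`, the second one is `Δ log Z = 4K` with
`Z = α² + β²`. -/
lemma alg_identities (W p H α β A B C D e0 e1 e2 e3 e4 r s t a b c d w1 w1' w11 w22 w12 : ℝ)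
    (hp : p ^ 2 = W ^ 2 - 1)
    (hr : r = W ^ 3 * (H + α)) (hs : s = W ^ 2 * β) (ht : t = W * (H - α))
    (hC : C = -A + p * (2 * (α ^ 2 + β ^ 2) + 4 * H ^ 2 + 6 * H * α))
    (hD : D = -B + 6 * H * p * β)
    (ha : a = W ^ 4 * A) (hb : b = W ^ 3 * B) (hc : c = W ^ 2 * C) (hd : d = W * D)
    (hw1 : w1 = p * W ^ 2 * (H + α)) (hw1' : w1' = p * W * β)
    (hw11 : w11 = W ^ 3 * ((H + α) ^ 2 + β ^ 2 + p * A))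
    (hw22 : w22 = W * (β ^ 2 + p * C + (H - α) ^ 2))
    (hw12 : w12 = W ^ 2 * (2 * H * β + p * B))
    (E11 : e0 + 2 * s ^ 2 * r - 2 * (2 * r * s * s + p * b * s + 2 * p * s * b) + W ^ 2 * e2
      + 4 * p * r * c + (2 * r ^ 2 + 2 * p * a) * t - 2 * H * (3 * W ^ 2 * w11 + 6 * W * w1 ^ 2) = 0)
    (E22 : e2 + 2 * t ^ 2 * r - 2 * (2 * s * t * s + p * d * s + 2 * p * t * c) + W ^ 2 * e4
      + 4 * p * s * d + (2 * s ^ 2 + 2 * p * c) * t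
      - 2 * H * (3 * W ^ 2 * w22 + 6 * W * w1' ^ 2) = 0)
    (E12 : e1 + 2 * s * t * r - 2 * (r * t * s + s * s * s + p * c * s + p * s * c + p * t * b)
      + W ^ 2 * e3 + 2 * p * r * d + 2 * p * s * c + (2 * r * s + 2 * p * b) * t
      - 2 * H * (3 * W ^ 2 * w12 + 6 * W * w1 * w1') = 0)
    (X0 X1 X2 X11 X22 : ℝ)
    (hX0 : X0 = W ^ 4 * (α ^ 2 + β ^ 2))
    (hX1 : X1 = 4 * H ^ 2 * W ^ 3 * w1 - (a * t + r * c - 2 * s * b))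
    (hX2 : X2 = 4 * H ^ 2 * W ^ 3 * w1' - (b * t + r * d - 2 * s * c))
    (hX11 : X11 = H ^ 2 * (4 * W ^ 3 * w11 + 12 * W ^ 2 * w1 ^ 2)
      - (e0 * t + 2 * a * c + r * e2 - 2 * b ^ 2 - 2 * s * e1))
    (hX22 : X22 = H ^ 2 * (4 * W ^ 3 * w22 + 12 * W ^ 2 * w1' ^ 2)
      - (e2 * t + 2 * b * d + r * e4 - 2 * c ^ 2 - 2 * s * e3)) :
    (w11 + W ^ 2 * w22 - 2 * H * W * p * w1
      = W ^ 3 * (2 * H ^ 2 + 2 * (α ^ 2 + β ^ 2) + 2 * ((H + α) ^ 2 + β ^ 2) * p ^ 2)) ∧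
    (X0 * (X11 + W ^ 2 * X22 - 2 * H * W * p * X1) - (X1 ^ 2 + W ^ 2 * X2 ^ 2)
      = X0 ^ 2 * (4 * W ^ 2 * (H ^ 2 - (α ^ 2 + β ^ 2)) + 4 * W ^ 2 * (2 * H ^ 2
        + 2 * (α ^ 2 + β ^ 2) + ((H + α) ^ 2 + β ^ 2) * p ^ 2))) := by
  constructor
  · subst hw11 hw22 hw1 hC
    ring
  · have key : X11 + W ^ 2 * X22 - 2 * H * W * p * X1
        = H ^ 2 * (4 * W ^ 3 * w11 + 12 * W ^ 2 * w1 ^ 2) - (2 * a * c - 2 * b ^ 2)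
          + W ^ 2 * (H ^ 2 * (4 * W ^ 3 * w22 + 12 * W ^ 2 * w1' ^ 2) - (2 * b * d - 2 * c ^ 2))
          - 2 * H * W * p * X1
          + t * (2 * s ^ 2 * r - 2 * (2 * r * s * s + p * b * s + 2 * p * s * b)
      + 4 * p * r * c + (2 * r ^ 2 + 2 * p * a) * t - 2 * H * (3 * W ^ 2 * w11 + 6 * W * w1 ^ 2))
          + r * (2 * t ^ 2 * r - 2 * (2 * s * t * s + p * d * s + 2 * p * t * c)
      + 4 * p * s * d + (2 * s ^ 2 + 2 * p * c) * t
      - 2 * H * (3 * W ^ 2 * w22 + 6 * W * w1' ^ 2))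
          - 2 * s * (2 * s * t * r - 2 * (r * t * s + s * s * s + p * c * s + p * s * c + p * t * b)
      + 2 * p * r * d + 2 * p * s * c + (2 * r * s + 2 * p * b) * t
      - 2 * H * (3 * W ^ 2 * w12 + 6 * W * w1 * w1')) := by
      subst hX11 hX22
      linear_combination (-t) * E11 + (-r) * E22 + 2 * s * E12
    rw [key]
    clear key E11 E22 E12 hX11 hX22
    subst hX1 hX2 hX0 hw11 hw22 hw12 hw1 hw1' ha hb hc hd hr hs ht hC hD
    linear_combination (-4 * W ^ 10 * (α ^ 2 + β ^ 2) * (H ^ 2 - (α ^ 2 + β ^ 2)) ^ 2) * hp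

set_option maxHeartbeats 1000000 in
/-- Lower bound for the Laplacian of `log (Z (1+ν)⁻⁶)` in raw jet variables at a point with `q = 0`.
`X = W⁴ Z`, `ν = 1/W`, and `wd` is the second derivative of `W` in the diagonal direction
`e₁ + e₂`; its primed companion is the first derivative. -/
lemma alg_lower (W p H r s t a b c d e0 e1 e2 e3 e4 w1 w1' wd' w11 w22 wd : ℝ)
    (hW : 1 ≤ W) (hp : 1 + p ^ 2 = W ^ 2)
    (hE0 : r + W ^ 2 * t = 2 * H * W ^ 3)
    (hw1 : 2 * W * w1 = 2 * p * r) (hw1' : 2 * W * w1' = 2 * p * s)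
    (hwd' : 2 * W * wd' = 2 * p * (r + s))
    (hw11 : 2 * w1 ^ 2 + 2 * W * w11 = 2 * r ^ 2 + 2 * p * a + 2 * s ^ 2)
    (hw22 : 2 * w1' ^ 2 + 2 * W * w22 = 2 * s ^ 2 + 2 * p * c + 2 * t ^ 2)
    (hwd : 2 * wd' ^ 2 + 2 * W * wd = 2 * (r + s) ^ 2 + 2 * p * (a + 2 * b + c) + 2 * (s + t) ^ 2)
    (hE1 : a - 2 * p * s * s + W ^ 2 * c + 2 * p * r * t - 6 * H * W ^ 2 * w1 = 0)
    (hE2 : b - 2 * p * t * s + W ^ 2 * d + 2 * p * s * t - 6 * H * W ^ 2 * w1' = 0)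
    (E11 : e0 + 2 * s ^ 2 * r - 2 * (2 * r * s * s + p * b * s + 2 * p * s * b) + W ^ 2 * e2
      + 4 * p * r * c + (2 * r ^ 2 + 2 * p * a) * t - 2 * H * (3 * W ^ 2 * w11 + 6 * W * w1 ^ 2) = 0)
    (E22 : e2 + 2 * t ^ 2 * r - 2 * (2 * s * t * s + p * d * s + 2 * p * t * c) + W ^ 2 * e4
      + 4 * p * s * d + (2 * s ^ 2 + 2 * p * c) * t
      - 2 * H * (3 * W ^ 2 * w22 + 6 * W * w1' ^ 2) = 0)
    (Edd : (e0 + 2 * e1 + e2) + 2 * (s + t) ^ 2 * r - 2 * (2 * (r + s) * (s + t) * s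
        + p * (b + 2 * c + d) * s + 2 * p * (s + t) * (b + c)) + W ^ 2 * (e2 + 2 * e3 + e4)
      + 4 * p * (r + s) * (c + d) + (2 * (r + s) ^ 2 + 2 * p * (a + 2 * b + c)) * t
      - 2 * H * (3 * W ^ 2 * wd + 6 * W * wd' ^ 2) = 0)
    (X0 X1 X2 X11 X22 : ℝ) (hXpos : 0 < X0)
    (hX0 : X0 = H ^ 2 * W ^ 4 - (r * t - s ^ 2))
    (hX1 : X1 = 4 * H ^ 2 * W ^ 3 * w1 - (a * t + r * c - 2 * s * b))
    (hX2 : X2 = 4 * H ^ 2 * W ^ 3 * w1' - (b * t + r * d - 2 * s * c))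
    (hX11 : X11 = H ^ 2 * (4 * W ^ 3 * w11 + 12 * W ^ 2 * w1 ^ 2)
      - (e0 * t + 2 * a * c + r * e2 - 2 * b ^ 2 - 2 * s * e1))
    (hX22 : X22 = H ^ 2 * (4 * W ^ 3 * w22 + 12 * W ^ 2 * w1' ^ 2)
      - (e2 * t + 2 * b * d + r * e4 - 2 * c ^ 2 - 2 * s * e3)) :
    W ^ 2 * (X0 / W ^ 4 - 26 * H ^ 2) ≤
      ((X11 / X0 - (X1 / X0) ^ 2) + 2 * (w11 / W - (w1 / W) ^ 2)
          - 6 * (w11 / (1 + W) - (w1 / (1 + W)) ^ 2))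
        + W ^ 2 * ((X22 / X0 - (X2 / X0) ^ 2) + 2 * (w22 / W - (w1' / W) ^ 2)
          - 6 * (w22 / (1 + W) - (w1' / (1 + W)) ^ 2))
        - 2 * H * W * p * (X1 / X0 + 2 * (w1 / W) - 6 * (w1 / (1 + W))) := by
  have W0 : 0 < W := by linarith
  have hp' : p ^ 2 = W ^ 2 - 1 := by linarith
  obtain ⟨α, hα⟩ : ∃ α, r = W ^ 3 * (H + α) := ⟨r / W ^ 3 - H, by field_simp; ring⟩
  obtain ⟨β, hβ⟩ : ∃ β, s = W ^ 2 * β := ⟨s / W ^ 2, by field_simp⟩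
  obtain ⟨A, hA⟩ : ∃ A, a = W ^ 4 * A := ⟨a / W ^ 4, by field_simp⟩
  obtain ⟨B, hB⟩ : ∃ B, b = W ^ 3 * B := ⟨b / W ^ 3, by field_simp⟩
  have ht : t = W * (H - α) := by
    have : W ^ 2 * t = W ^ 2 * (W * (H - α)) := by rw [hα] at hE0; linarith
    exact mul_left_cancel₀ (by positivity) this
  have k1 : w1 = p * W ^ 2 * (H + α) := by
    have : W * w1 = W * (p * W ^ 2 * (H + α)) := by rw [hα] at hw1; linarith
    exact mul_left_cancel₀ W0.ne' this
  have k1' : w1' = p * W * β := by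
    have : W * w1' = W * (p * W * β) := by rw [hβ] at hw1'; linarith
    exact mul_left_cancel₀ W0.ne' this
  have kd' : wd' = w1 + w1' := by
    have : W * wd' = W * (w1 + w1') := by linarith
    exact mul_left_cancel₀ W0.ne' this
  have hc : c = W ^ 2 * (-A + p * (2 * (α ^ 2 + β ^ 2) + 4 * H ^ 2 + 6 * H * α)) := by
    refine mul_left_cancel₀ (pow_ne_zero 2 W0.ne') ?_
    rw [hA, hα, hβ, ht, k1] at hE1
    linear_combination hE1
  have hd : d = W * (-B + 6 * H * p * β) := by
    refine mul_left_cancel₀ (pow_ne_zero 2 W0.ne') ?_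
    rw [hB, hβ, ht, k1'] at hE2
    linear_combination hE2
  have k11 : w11 = W ^ 3 * ((H + α) ^ 2 + β ^ 2 + p * A) := by
    refine mul_left_cancel₀ W0.ne' ?_
    rw [hA, hα, hβ, k1] at hw11
    linear_combination hw11 / 2 - W ^ 4 * (H + α) ^ 2 * hp'
  have k22 : w22 = W * (β ^ 2 + p * (-A + p * (2 * (α ^ 2 + β ^ 2) + 4 * H ^ 2 + 6 * H * α))
      + (H - α) ^ 2) := by
    refine mul_left_cancel₀ W0.ne' ?_
    rw [hc, ht, hβ, k1'] at hw22
    linear_combination hw22 / 2 - W ^ 2 * β ^ 2 * hp'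
  obtain ⟨w12, h12⟩ : ∃ w12, wd = w11 + 2 * w12 + w22 := ⟨(wd - w11 - w22) / 2, by ring⟩
  have k12 : w12 = W ^ 2 * (2 * H * β + p * B) := by
    refine mul_left_cancel₀ W0.ne' ?_
    have e : 2 * w1 * w1' + 2 * W * w12 = 2 * r * s + 2 * p * b + 2 * s * t := by
      rw [h12, kd'] at hwd
      linear_combination (hwd - hw11 - hw22) / 2
    rw [hα, hβ, ht, hB, k1, k1'] at e
    linear_combination e / 2 - W ^ 3 * (H + α) * β * hp'
  have E12 : e1 + 2 * s * t * r - 2 * (r * t * s + s * s * s + p * c * s + p * s * c + p * t * b)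
      + W ^ 2 * e3 + 2 * p * r * d + 2 * p * s * c + (2 * r * s + 2 * p * b) * t
      - 2 * H * (3 * W ^ 2 * w12 + 6 * W * w1 * w1') = 0 := by
    rw [h12, kd'] at Edd
    linear_combination (Edd - E11 - E22) / 2
  have hX0' : X0 = W ^ 4 * (α ^ 2 + β ^ 2) := by
    rw [hX0, hα, hβ, ht]; ring
  obtain ⟨I1, I2⟩ := alg_identities W p H α β A B _ _ e0 e1 e2 e3 e4 r s t a b c d w1 w1' w11 w22 w12
    hp' hα hβ ht rfl rfl hA hB hc hd k1 k1' k11 k22 k12 E11 E22 E12 X0 X1 X2 X11 X22 hX0' hX1 hX2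
    hX11 hX22
  have hB : w1 ^ 2 + W ^ 2 * w1' ^ 2 = p ^ 2 * W ^ 4 * ((H + α) ^ 2 + β ^ 2) := by
    rw [k1, k1']; ring
  set Z := α ^ 2 + β ^ 2 with hZ
  have hZ0 : 0 ≤ Z := by positivity
  set Y := (H + α) ^ 2 + β ^ 2 with hY
  have hYZ : 5 / 6 * Z - 5 * H ^ 2 ≤ Y := by
    have e : Y - (5 / 6 * Z - 5 * H ^ 2) = ((6 * H + α) ^ 2 + β ^ 2) / 6 := by
      rw [hY, hZ]; clear * -; ring
    have e' : 0 ≤ ((6 * H + α) ^ 2 + β ^ 2) / 6 := by positivity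
    clear * - e e'
    linarith
  have hXl : (X11 / X0 - (X1 / X0) ^ 2) + W ^ 2 * (X22 / X0 - (X2 / X0) ^ 2)
      - 2 * H * W * p * (X1 / X0) = 4 * W ^ 2 * (H ^ 2 - Z) + 4 * W ^ 2 * (2 * H ^ 2
        + 2 * Z + Y * p ^ 2) := by
    have : (X11 / X0 - (X1 / X0) ^ 2) + W ^ 2 * (X22 / X0 - (X2 / X0) ^ 2)
      - 2 * H * W * p * (X1 / X0)
      = (X0 * (X11 + W ^ 2 * X22 - 2 * H * W * p * X1) - (X1 ^ 2 + W ^ 2 * X2 ^ 2)) / X0 ^ 2 := by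
      clear * - hXpos
      field_simp; ring
    rw [this, I2]; field_simp
  have hWl : ∀ y : ℝ, 0 < y → (w11 / y - (w1 / y) ^ 2) + W ^ 2 * (w22 / y - (w1' / y) ^ 2)
      - 2 * H * W * p * (w1 / y) = W ^ 3 * (2 * H ^ 2 + 2 * Z + 2 * Y * p ^ 2) / y
        - p ^ 2 * W ^ 4 * Y / y ^ 2 := by
    intro y hy
    have e : (w11 / y - (w1 / y) ^ 2) + W ^ 2 * (w22 / y - (w1' / y) ^ 2)
      - 2 * H * W * p * (w1 / y) = (w11 + W ^ 2 * w22 - 2 * H * W * p * w1) / y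
        - (w1 ^ 2 + W ^ 2 * w1' ^ 2) / y ^ 2 := by
      clear * -
      ring
    rw [e, I1, hB]
  have h1 := hWl W W0
  have h2 := hWl (1 + W) (by linarith)
  have hfin : 4 * W ^ 2 * (H ^ 2 - Z) + 6 * (W ^ 2 / (1 + W) * (2 * H ^ 2 + 2 * Z + (W - 1) * Y))
      = (4 * W ^ 2 * (H ^ 2 - Z) + 4 * W ^ 2 * (2 * H ^ 2 + 2 * Z + Y * p ^ 2))
        + 2 * (W ^ 3 * (2 * H ^ 2 + 2 * Z + 2 * Y * p ^ 2) / W - p ^ 2 * W ^ 4 * Y / W ^ 2)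
        - 6 * (W ^ 3 * (2 * H ^ 2 + 2 * Z + 2 * Y * p ^ 2) / (1 + W)
          - p ^ 2 * W ^ 4 * Y / (1 + W) ^ 2) := by
    rw [hp']
    clear * - W0
    field_simp; ring
  have hlow : Z * 5 / 6 - 5 * H ^ 2 ≤ 1 / (1 + W) * (2 * H ^ 2 + 2 * Z + (W - 1) * Y) := by
    rw [one_div, inv_mul_eq_div, le_div_iff₀ (by linarith)]
    clear * - hYZ hW hZ0
    nlinarith [mul_le_mul_of_nonneg_left hYZ (show 0 ≤ W - 1 by linarith), sq_nonneg H]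
  have hX0W : X0 / W ^ 4 = Z := by rw [hX0']; field_simp
  have hlow2 := mul_le_mul_of_nonneg_left hlow (sq_nonneg W)
  have : W ^ 2 * (1 / (1 + W) * (2 * H ^ 2 + 2 * Z + (W - 1) * Y))
    = W ^ 2 / (1 + W) * (2 * H ^ 2 + 2 * Z + (W - 1) * Y) := by ring
  rw [hX0W]
  rw [this] at hlow2
  have hT : ((X11 / X0 - (X1 / X0) ^ 2) + 2 * (w11 / W - (w1 / W) ^ 2)
          - 6 * (w11 / (1 + W) - (w1 / (1 + W)) ^ 2))
        + W ^ 2 * ((X22 / X0 - (X2 / X0) ^ 2) + 2 * (w22 / W - (w1' / W) ^ 2)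
          - 6 * (w22 / (1 + W) - (w1' / (1 + W)) ^ 2))
        - 2 * H * W * p * (X1 / X0 + 2 * (w1 / W) - 6 * (w1 / (1 + W)))
      = 4 * W ^ 2 * (H ^ 2 - Z)
        + 6 * (W ^ 2 / (1 + W) * (2 * H ^ 2 + 2 * Z + (W - 1) * Y)) := by
    rw [hfin, ← hXl, ← h1, ← h2]
    clear * -
    ring
  rw [hT]
  clear * - hlow2 hZ0
  linarith

end CMC

namespace CMC
open scoped Topology ContDiff

/-! ### The equation in a rotated frame -/

variable {U : Set (ℝ × ℝ)} {f g u : ℝ × ℝ → ℝ} {x z e e' : ℝ × ℝ} {H R : ℝ}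

/-- First coordinate direction. -/
abbrev dX : ℝ × ℝ := (1, 0)
/-- Second coordinate direction. -/
abbrev dY : ℝ × ℝ := (0, 1)

/-- `V = 1 + |∇u|²`. -/
def VV (u : ℝ × ℝ → ℝ) (x : ℝ × ℝ) : ℝ := 1 + (dd dX u x) ^ 2 + (dd dY u x) ^ 2
/-- `W = √(1 + |∇u|²)`. -/
def WW (u : ℝ × ℝ → ℝ) (x : ℝ × ℝ) : ℝ := √(VV u x)
/-- `W⁴ (H² - K)`, where `K` is the Gauss curvature of the graph of `u`. -/
def XX (H : ℝ) (u : ℝ × ℝ → ℝ) (x : ℝ × ℝ) : ℝ :=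
  H ^ 2 * (VV u x) ^ 2
    - (dd dX (dd dX u) x * dd dY (dd dY u) x - (dd dY (dd dX u) x) ^ 2)

/-- The operator `a^{ij}(∇u) ∂_{ij}` of the mean curvature equation, applied to `f`. -/
def Lop (u f : ℝ × ℝ → ℝ) (x : ℝ × ℝ) : ℝ :=
  (1 + (dd dY u x) ^ 2) * dd dX (dd dX f) x
    - 2 * (dd dX u x) * (dd dY u x) * dd dY (dd dX f) x
    + (1 + (dd dX u x) ^ 2) * dd dY (dd dY f) x

/-- Smooth solution of the mean curvature equation, with the right-hand side written as
`2 H W³`. -/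
def IsSol (H : ℝ) (U : Set (ℝ × ℝ)) (u : ℝ × ℝ → ℝ) : Prop :=
  Sm U u ∧ ∀ x ∈ U, Lop u u x = 2 * H * (WW u x) ^ 3

lemma VV_one_le : 1 ≤ VV u x := by unfold VV; nlinarith [sq_nonneg (dd dX u x), sq_nonneg (dd dY u x)]
lemma VV_pos : 0 < VV u x := lt_of_lt_of_le one_pos VV_one_le
lemma WW_sq : WW u x ^ 2 = VV u x := Real.sq_sqrt VV_pos.le
lemma WW_one_le : 1 ≤ WW u x := Real.one_le_sqrt.2 VV_one_le
lemma WW_pos : 0 < WW u x := lt_of_lt_of_le one_pos WW_one_le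

lemma Sm.VV (hu : Sm U u) (hU : IsOpen U) : Sm U (VV u) :=
  ((Sm.const 1).add ((hu.dd hU dX).pow 2)).add ((hu.dd hU dY).pow 2)

lemma Sm.WW (hu : Sm U u) (hU : IsOpen U) : Sm U (WW u) :=
  (hu.VV hU).sqrt fun _ _ => VV_pos.ne'

lemma Sm.XX (hu : Sm U u) (hU : IsOpen U) : Sm U (XX H u) :=
  ((Sm.const (H ^ 2)).mul ((hu.VV hU).pow 2)).sub
    ((((hu.dd hU dX).dd hU dX).mul ((hu.dd hU dY).dd hU dY)).sub (((hu.dd hU dX).dd hU dY).pow 2))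

lemma dd_frame (a b : ℝ) : dd (a, b) f x = a * dd dX f x + b * dd dY f x := by
  have : ((a, b) : ℝ × ℝ) = a • dX + b • dY := by simp [dX, dY]
  rw [this, dd_lin]

lemma dd2_frame (hU : IsOpen U) (hf : Sm U f) (hx : x ∈ U) (a b a' b' : ℝ) :
    dd (a, b) (dd (a', b') f) x = a * a' * dd dX (dd dX f) x
      + (a * b' + b * a') * dd dY (dd dX f) x + b * b' * dd dY (dd dY f) x := by
  have h1 : ∀ d : ℝ × ℝ, dd d (dd (a', b') f) x
      = a' * dd d (dd dX f) x + b' * dd d (dd dY f) x := by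
    intro d
    have h2 := dd_frame (f := dd d f) (x := x) a' b'
    rw [dd_comm hU hf hx, h2, dd_comm (e := dX) (e' := d) hU hf hx,
      dd_comm (e := dY) (e' := d) hU hf hx]
  have h3 := dd_frame (f := dd (a', b') f) (x := x) a b
  rw [h3, h1, h1, dd_comm (e := dX) (e' := dY) hU hf hx]
  ring

/-- Second order jet along an arbitrary direction of the plane spanned by a frame. -/
lemma Sm.J2 (hf : Sm U f) (hU : IsOpen U) (hx : x ∈ U) (e e' : ℝ × ℝ) (v w : ℝ) :
    CMC.J (fun t : ℝ => f (x + t • (v • e + w • e'))) (f x)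
      (v * CMC.dd e f x + w * CMC.dd e' f x)
      (v ^ 2 * CMC.dd e (CMC.dd e f) x + 2 * v * w * CMC.dd e' (CMC.dd e f) x
        + w ^ 2 * CMC.dd e' (CMC.dd e' f) x) := by
  refine (hf.J hU hx (v • e + w • e')).eq rfl (dd_lin v w) ?_
  have h1 : ∀ a : ℝ × ℝ, CMC.dd a (CMC.dd (v • e + w • e') f) x
      = v * CMC.dd a (CMC.dd e f) x + w * CMC.dd a (CMC.dd e' f) x := by
    intro a
    rw [dd_comm hU hf hx, dd_lin, dd_comm (e := e) hU hf hx, dd_comm (e := e') hU hf hx]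
  rw [dd_lin, h1, h1, dd_comm (e := e) (e' := e') hU hf hx]
  ring

/-- The jets of the first and second derivatives of `u` in a frame, with the symmetries of the
third and fourth derivatives built in. -/
lemma jets (hU : IsOpen U) (hu : Sm U u) (hx : x ∈ U) (e e' : ℝ × ℝ) :
    ∃ a b c d e0 e1 e2 e3 e4 : ℝ, ∀ v w : ℝ,
      J (fun t : ℝ => dd e u (x + t • (v • e + w • e'))) (dd e u x)
        (v * dd e (dd e u) x + w * dd e' (dd e u) x) (v ^ 2 * a + 2 * v * w * b + w ^ 2 * c) ∧
      J (fun t : ℝ => dd e' u (x + t • (v • e + w • e'))) (dd e' u x)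
        (v * dd e' (dd e u) x + w * dd e' (dd e' u) x) (v ^ 2 * b + 2 * v * w * c + w ^ 2 * d) ∧
      J (fun t : ℝ => dd e (dd e u) (x + t • (v • e + w • e'))) (dd e (dd e u) x)
        (v * a + w * b) (v ^ 2 * e0 + 2 * v * w * e1 + w ^ 2 * e2) ∧
      J (fun t : ℝ => dd e' (dd e u) (x + t • (v • e + w • e'))) (dd e' (dd e u) x)
        (v * b + w * c) (v ^ 2 * e1 + 2 * v * w * e2 + w ^ 2 * e3) ∧
      J (fun t : ℝ => dd e' (dd e' u) (x + t • (v • e + w • e'))) (dd e' (dd e' u) x)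
        (v * c + w * d) (v ^ 2 * e2 + 2 * v * w * e3 + w ^ 2 * e4) := by
  have hp := hu.dd hU e
  have hq := hu.dd hU e'
  have hr := hp.dd hU e
  have hs := hp.dd hU e'
  have ht := hq.dd hU e'
  have q1 : ∀ y ∈ U, dd e (dd e' u) y = dd e' (dd e u) y := fun y hy => dd_comm hU hu hy
  have s1 : ∀ y ∈ U, dd e (dd e' (dd e u)) y = dd e' (dd e (dd e u)) y :=
    fun y hy => dd_comm hU hp hy
  have t1 : ∀ y ∈ U, dd e (dd e' (dd e' u)) y = dd e' (dd e' (dd e u)) y := fun y hy => by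
    rw [dd_comm hU hq hy]; exact dd_congr hU q1 hy
  refine ⟨dd e (dd e (dd e u)) x, dd e' (dd e (dd e u)) x, dd e' (dd e' (dd e u)) x,
    dd e' (dd e' (dd e' u)) x, dd e (dd e (dd e (dd e u))) x, dd e' (dd e (dd e (dd e u))) x,
    dd e' (dd e' (dd e (dd e u))) x, dd e' (dd e' (dd e' (dd e u))) x,
    dd e' (dd e' (dd e' (dd e' u))) x, fun v w => ⟨hp.J2 hU hx e e' v w, ?_,
      hr.J2 hU hx e e' v w, ?_, ?_⟩⟩
  · refine (hq.J2 hU hx e e' v w).eq rfl (by rw [q1 x hx]) ?_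
    rw [dd_congr hU q1 hx, dd_congr hU q1 hx, s1 x hx]
  · refine (hs.J2 hU hx e e' v w).eq rfl (by rw [s1 x hx]) ?_
    rw [dd_congr hU s1 hx, dd_congr hU s1 hx, dd_comm hU hr hx]
  · refine (ht.J2 hU hx e e' v w).eq rfl (by rw [t1 x hx]) ?_
    rw [dd_congr hU t1 hx, dd_congr hU t1 hx, dd_comm hU hs hx, dd_congr hU s1 hx]

/-- A rotated frame with the derivative of `u` in its second direction zero. -/
lemma exists_frame (A B : ℝ) : ∃ c s : ℝ, c ^ 2 + s ^ 2 = 1 ∧ -s * A + c * B = 0 := by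
  by_cases h : A ^ 2 + B ^ 2 = 0
  · have hA : A = 0 := by nlinarith [sq_nonneg A, sq_nonneg B]
    have hB : B = 0 := by nlinarith [sq_nonneg A, sq_nonneg B]
    exact ⟨1, 0, by norm_num, by simp [hB]⟩
  · have hpos : 0 < A ^ 2 + B ^ 2 := lt_of_le_of_ne (by positivity) (Ne.symm h)
    have hs := Real.sq_sqrt hpos.le
    have hs0 := Real.sqrt_pos.2 hpos
    refine ⟨A / √(A ^ 2 + B ^ 2), B / √(A ^ 2 + B ^ 2), ?_, ?_⟩
    · rw [div_pow, div_pow, hs]; field_simp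
    · ring

/-- `R²` minus the squared Euclidean distance to `z`. -/
def eta (R : ℝ) (z : ℝ × ℝ) (y : ℝ × ℝ) : ℝ := R ^ 2 - ((y.1 - z.1) ^ 2 + (y.2 - z.2) ^ 2)

lemma eta_J (R : ℝ) (z x v : ℝ × ℝ) :
    J (fun t : ℝ => eta R z (x + t • v)) (eta R z x)
      (-2 * ((x.1 - z.1) * v.1 + (x.2 - z.2) * v.2)) (-2 * (v.1 ^ 2 + v.2 ^ 2)) := by
  have key : ∀ a b : ℝ, J (fun t : ℝ => a + t * b) a b 0 := by
    intro a b
    refine ⟨by simp, fun _ => b, rfl, Eventually.of_forall fun t => ?_, hasDerivAt_const _ _⟩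
    simpa using ((hasDerivAt_id t).mul_const b).const_add a
  have h1 := key (x.1 - z.1) v.1
  have h2 := key (x.2 - z.2) v.2
  have h := (J.const (R ^ 2)).sub ((h1.mul h1).add (h2.mul h2))
  refine (h.congr (Eventually.of_forall fun t => ?_)).eq ?_ ?_ ?_
  · simp only [eta, Prod.fst_add, Prod.snd_add, Prod.smul_fst, Prod.smul_snd, smul_eq_mul]; ring
  · simp only [eta]; ring
  · ring
  · ring

/-- The quantity whose maximum is studied: `log (η² Z (1 + 1/W)⁻⁶)` with `Z = X / W⁴`. -/
def psi (H R : ℝ) (z : ℝ × ℝ) (u : ℝ × ℝ → ℝ) (y : ℝ × ℝ) : ℝ :=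
  2 * Real.log (eta R z y) + (Real.log (XX H u y) + 2 * Real.log (WW u y)
    - 6 * Real.log (1 + WW u y))

lemma J.psi {v : ℝ × ℝ} {n1 n2 X1 X2 w1 w2 : ℝ}
    (hn : J (fun t : ℝ => eta R z (x + t • v)) (eta R z x) n1 n2)
    (hX : J (fun t : ℝ => XX H u (x + t • v)) (XX H u x) X1 X2)
    (hw : J (fun t : ℝ => WW u (x + t • v)) (WW u x) w1 w2)
    (n0 : 0 < eta R z x) (X0 : 0 < XX H u x) :
    J (fun t : ℝ => psi H R z u (x + t • v)) (psi H R z u x)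
      (2 * (n1 / eta R z x) + (X1 / XX H u x + 2 * (w1 / WW u x) - 6 * (w1 / (1 + WW u x))))
      (2 * (n2 / eta R z x - (n1 / eta R z x) ^ 2) + (X2 / XX H u x - (X1 / XX H u x) ^ 2
        + 2 * (w2 / WW u x - (w1 / WW u x) ^ 2)
        - 6 * (w2 / (1 + WW u x) - (w1 / (1 + WW u x)) ^ 2))) := by
  have h1 : (0 : ℝ) < 1 + WW u x := by linarith [WW_pos (u := u) (x := x)]
  have hw1 := ((J.const 1).add hw).log h1
  have := ((hn.log n0).smul 2).add (((hX.log X0).add ((hw.log WW_pos).smul 2)).sub (hw1.smul 6))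
  exact this.eq rfl (by ring) (by ring)

end CMC

namespace CMC
open scoped Topology ContDiff

/-! ### The curvature estimate -/

variable {U : Set (ℝ × ℝ)} {f g u : ℝ × ℝ → ℝ} {x z e e' : ℝ × ℝ} {H R : ℝ}

/-- The equation, the definition of `W` and the definition of `X`, differentiated twice along a
line at a point where the second component of the gradient vanishes. -/
lemma line_eqs {Fp Fq Fr Fs Ft Fw FX : ℝ → ℝ}
    {p p1 p2 q1 q2 r r1 r2 s s1 s2 t t1 t2 w w1 w2 : ℝ}
    (hp : J Fp p p1 p2) (hq : J Fq 0 q1 q2) (hr : J Fr r r1 r2) (hs : J Fs s s1 s2)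
    (ht : J Ft t t1 t2) (hw : J Fw w w1 w2)
    (hW : ∀ᶠ τ in 𝓝 0, Fw τ * Fw τ = 1 + Fp τ * Fp τ + Fq τ * Fq τ)
    (hE : ∀ᶠ τ in 𝓝 0, (1 + Fq τ * Fq τ) * Fr τ - 2 * (Fp τ * Fq τ * Fs τ)
      + (1 + Fp τ * Fp τ) * Ft τ = 2 * H * (Fw τ * (Fw τ * Fw τ)))
    (hX : ∀ᶠ τ in 𝓝 0, FX τ = H ^ 2 * ((Fw τ * Fw τ) * (Fw τ * Fw τ)) - (Fr τ * Ft τ - Fs τ * Fs τ)) :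
    w ^ 2 = 1 + p ^ 2 ∧ 2 * w * w1 = 2 * p * p1 ∧
    2 * w1 ^ 2 + 2 * w * w2 = 2 * p1 ^ 2 + 2 * p * p2 + 2 * q1 ^ 2 ∧
    r + (1 + p ^ 2) * t = 2 * H * w ^ 3 ∧
    r1 - 2 * p * q1 * s + (1 + p ^ 2) * t1 + 2 * p * p1 * t - 6 * H * w ^ 2 * w1 = 0 ∧
    r2 + 2 * q1 ^ 2 * r - 2 * (2 * p1 * q1 * s + p * q2 * s + 2 * p * q1 * s1) + (1 + p ^ 2) * t2
      + 4 * p * p1 * t1 + (2 * p1 ^ 2 + 2 * p * p2) * t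
      - 2 * H * (3 * w ^ 2 * w2 + 6 * w * w1 ^ 2) = 0 ∧
    J FX (H ^ 2 * w ^ 4 - (r * t - s ^ 2))
      (4 * H ^ 2 * w ^ 3 * w1 - (r1 * t + r * t1 - 2 * s * s1))
      (H ^ 2 * (4 * w ^ 3 * w2 + 12 * w ^ 2 * w1 ^ 2)
        - (r2 * t + 2 * r1 * t1 + r * t2 - 2 * s1 ^ 2 - 2 * s * s2)) := by
  have hpp := hp.mul hp
  have hww := hw.mul hw
  obtain ⟨a0, a1, a2⟩ := (hww.congr (EventuallyEq.symm hW)).unique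
    (((J.const 1).add hpp).add (hq.mul hq))
  obtain ⟨b0, b1, b2⟩ := (((((J.const 1).add (hq.mul hq)).mul hr).sub
    (((hp.mul hq).mul hs).smul 2)).add (((J.const 1).add hpp).mul ht)).unique
      (((hw.mul hww).smul (2 * H)).congr hE)
  refine ⟨by linear_combination a0, by linear_combination a1, by linear_combination a2,
    by linear_combination b0, by linear_combination b1, by linear_combination b2, ?_⟩
  refine ((((hww.mul hww).smul (H ^ 2)).sub ((hr.mul ht).sub (hs.mul hs))).congr hX).eq ?_ ?_ ?_ <;>
  ring

/-- The gradient norm, the operator `L` applied to `u` and the Hessian determinant are invariant under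
rotations of the frame. -/
lemma frame_inv (hU : IsOpen U) (hu : Sm U u) (hx : x ∈ U) {c s : ℝ} (h : c ^ 2 + s ^ 2 = 1) :
    VV u x = 1 + dd (c, s) u x * dd (c, s) u x + dd (-s, c) u x * dd (-s, c) u x ∧
    (1 + dd (-s, c) u x * dd (-s, c) u x) * dd (c, s) (dd (c, s) u) x
      - 2 * (dd (c, s) u x * dd (-s, c) u x * dd (-s, c) (dd (c, s) u) x)
      + (1 + dd (c, s) u x * dd (c, s) u x) * dd (-s, c) (dd (-s, c) u) x = Lop u u x ∧
    dd (c, s) (dd (c, s) u) x * dd (-s, c) (dd (-s, c) u) x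
      - dd (-s, c) (dd (c, s) u) x * dd (-s, c) (dd (c, s) u) x
      = dd dX (dd dX u) x * dd dY (dd dY u) x - (dd dY (dd dX u) x) ^ 2 := by
  have k1 := dd2_frame hU hu hx c s c s
  have k2 := dd2_frame hU hu hx (-s) c c s
  have k3 := dd2_frame hU hu hx (-s) c (-s) c
  rw [k1, k2, k3]
  clear k1 k2 k3
  have h1 := dd_frame (f := u) (x := x) c s
  have h2 := dd_frame (f := u) (x := x) (-s) c
  rw [h1, h2, VV, Lop]
  clear h1 h2
  generalize dd dX u x = p
  generalize dd dY u x = q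
  generalize dd dX (dd dX u) x = A
  generalize dd dY (dd dX u) x = B
  generalize dd dY (dd dY u) x = C
  have hc : c ^ 2 = 1 - s ^ 2 := by linarith
  have hc4 : c ^ 4 = (1 - s ^ 2) ^ 2 := by rw [← hc]; ring

  refine ⟨?_, ?_, ?_⟩
  · ring_nf; rw [hc]; ring
  · ring_nf; simp only [hc4, hc]; ring
  · ring_nf; simp only [hc4, hc]; ring

/-- The inequality `alg_lower`, tested against the first and second order conditions at a maximum of
`2 log η + log (Z (1 + 1/W)⁻⁶)`.  Here `(y1, y2)` is the position relative to the centre of the disc,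
`g1` is a first derivative and `S1`, `S2` are second derivatives of `log (Z (1 + 1/W)⁻⁶)`. -/
lemma final_ineq {W p η y1 y2 g1 S1 S2 Z : ℝ} (hH : 0 < H) (hR : 0 < R) (hW : 1 ≤ W)
    (hp : p ^ 2 ≤ W ^ 2) (n0 : 0 < η) (hη : η = R ^ 2 - (y1 ^ 2 + y2 ^ 2))
    (h : W ^ 2 * (Z - 26 * H ^ 2) ≤ S1 + W ^ 2 * S2 - 2 * H * W * p * g1)
    (h1 : 2 * (-2 * y1 / η) + g1 = 0) (h1' : 2 * (-2 * 1 / η - (-2 * y1 / η) ^ 2) + S1 ≤ 0)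
    (h2' : 2 * (-2 * 1 / η - (-2 * y2 / η) ^ 2) + S2 ≤ 0) :
    η ^ 2 * Z ≤ 26 * H ^ 2 * R ^ 4 + (8 + 8 * H * R) * R ^ 2 + 8 * R ^ 2 := by
  have hy1 : y1 ^ 2 ≤ R ^ 2 := by nlinarith [sq_nonneg y1, sq_nonneg y2]
  have hηR : η ≤ R ^ 2 := by nlinarith [sq_nonneg y1, sq_nonneg y2]
  have W0 : 0 < W := by linarith
  -- the terms coming from the cut-off function
  have k1 : η ^ 2 * S1 ≤ 4 * η + 8 * y1 ^ 2 := by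
    have : S1 ≤ 4 / η + 8 * y1 ^ 2 / η ^ 2 := by
      have : 4 / η + 8 * y1 ^ 2 / η ^ 2 = -(2 * (-2 * 1 / η - (-2 * y1 / η) ^ 2)) := by
        field_simp; ring
      linarith
    calc η ^ 2 * S1 ≤ η ^ 2 * (4 / η + 8 * y1 ^ 2 / η ^ 2) := by gcongr
      _ = _ := by field_simp
  have k2 : η ^ 2 * S2 ≤ 4 * η + 8 * y2 ^ 2 := by
    have : S2 ≤ 4 / η + 8 * y2 ^ 2 / η ^ 2 := by
      have : 4 / η + 8 * y2 ^ 2 / η ^ 2 = -(2 * (-2 * 1 / η - (-2 * y2 / η) ^ 2)) := by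
        field_simp; ring
      linarith
    calc η ^ 2 * S2 ≤ η ^ 2 * (4 / η + 8 * y2 ^ 2 / η ^ 2) := by gcongr
      _ = _ := by field_simp
  have k3 : η ^ 2 * g1 = 4 * y1 * η := by
    have : g1 = 4 * y1 / η := by
      have : 4 * y1 / η = -(2 * (-2 * y1 / η)) := by ring
      linarith
    rw [this]; field_simp
  have hpy : -(p * y1) ≤ W * R := by
    have := abs_le_of_sq_le_sq' (a := p * y1) (b := W * R) (by
      rw [mul_pow, mul_pow]; gcongr) (by positivity)
    linarith [this.1]
  have W2 : 1 ≤ W ^ 2 := by nlinarith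
  have e1 : W ^ 2 * (η ^ 2 * Z) ≤ W ^ 2 * (26 * H ^ 2 * η ^ 2) + (4 * η + 8 * y1 ^ 2)
      + W ^ 2 * (4 * η + 8 * y2 ^ 2) + 8 * H * W * η * (W * R) := by
    have a1 : η ^ 2 * (W ^ 2 * (Z - 26 * H ^ 2)) ≤
        η ^ 2 * (S1 + W ^ 2 * S2 - 2 * H * W * p * g1) := by gcongr
    have a2 : W ^ 2 * (η ^ 2 * S2) ≤ W ^ 2 * (4 * η + 8 * y2 ^ 2) := by gcongr
    have a3 : 8 * H * W * η * (-(p * y1)) ≤ 8 * H * W * η * (W * R) := by gcongr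
    have a4 : 2 * H * W * p * (η ^ 2 * g1) = 8 * H * W * η * (p * y1) := by rw [k3]; ring
    nlinarith
  have e2 : W ^ 2 * (η ^ 2 * Z) ≤
      W ^ 2 * (26 * H ^ 2 * η ^ 2 + (8 + 8 * H * R) * η + 8 * R ^ 2) := by
    have a1 : 4 * η + 8 * y1 ^ 2 ≤ W ^ 2 * (4 * η + 8 * y1 ^ 2) :=
      le_mul_of_one_le_left (by positivity) W2
    have a2 : W ^ 2 * (y1 ^ 2 + y2 ^ 2) ≤ W ^ 2 * R ^ 2 := by gcongr; linarith
    nlinarith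
  have e3 := le_of_mul_le_mul_left e2 (by positivity)
  have e4 : η ^ 2 ≤ R ^ 4 := by
    calc η ^ 2 ≤ (R ^ 2) ^ 2 := by gcongr
      _ = R ^ 4 := by ring
  have e5 : 26 * H ^ 2 * η ^ 2 ≤ 26 * H ^ 2 * R ^ 4 := by gcongr
  have e6 : (8 + 8 * H * R) * η ≤ (8 + 8 * H * R) * R ^ 2 := by gcongr
  linarith

/-- The bound for `η² Z` at a maximum point of `psi`, obtained in the rotated frame whose second
direction is tangent to the level set of `u`. -/
lemma curvature_at_max (hH : 0 < H) (hR : 0 < R) (hU : IsOpen U) (hu : IsSol H U u) (hx : x ∈ U)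
    (n0 : 0 < eta R z x) (X0 : 0 < XX H u x) (hm : IsLocalMax (psi H R z u) x) :
    (eta R z x) ^ 2 * (XX H u x / VV u x ^ 2)
      ≤ 26 * H ^ 2 * R ^ 4 + (8 + 8 * H * R) * R ^ 2 + 8 * R ^ 2 := by
  obtain ⟨c, s, hcs, hq⟩ := exists_frame (dd dX u x) (dd dY u x)
  have hq0 : dd (-s, c) u x = 0 := by
    have := dd_frame (f := u) (x := x) (-s) c
    rw [this]; exact hq
  obtain ⟨a, b, c', d, e0, e1, e2, e3, e4, hj⟩ := jets hU hu.1 hx (c, s) (-s, c)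
  have hw := fun v w => (hu.1.WW hU).J2 hU hx (c, s) (-s, c) v w
  have hXJ := fun v w => (hu.1.XX (H := H) hU).J2 hU hx (c, s) (-s, c) v w
  have key : ∀ v w : ℝ, _ := fun v w => line_eqs (H := H)
    (FX := fun t => XX H u (x + t • (v • (c, s) + w • (-s, c))))
    (hj v w).1 (hq0 ▸ (hj v w).2.1) (hj v w).2.2.1
    (hj v w).2.2.2.1 (hj v w).2.2.2.2 (hw v w)
    (by
      filter_upwards [eventually_line hU hx (v • (c, s) + w • (-s, c))] with t ht
      rw [← (frame_inv hU hu.1 ht hcs).1, ← WW_sq]; ring)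
    (by
      filter_upwards [eventually_line hU hx (v • (c, s) + w • (-s, c))] with t ht
      rw [(frame_inv hU hu.1 ht hcs).2.1, hu.2 _ ht]; ring)
    (by
      filter_upwards [eventually_line hU hx (v • (c, s) + w • (-s, c))] with t ht
      rw [(frame_inv hU hu.1 ht hcs).2.2, XX, ← WW_sq]; ring)
  obtain ⟨A1, A2, A3, A4, A5, A6, A7⟩ := key 1 0
  obtain ⟨B1, B2, B3, B4, B5, B6, B7⟩ := key 0 1
  obtain ⟨C1, C2, C3, C4, C5, C6, C7⟩ := key 1 1
  obtain ⟨D0, D1, D2⟩ := A7.unique (hXJ 1 0)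
  obtain ⟨G0, G1, G2⟩ := B7.unique (hXJ 0 1)
  have P1 := (J.psi (eta_J R z x _) (hXJ 1 0) (hw 1 0) n0 X0).max (isLocalMax_line hm _)
  have P2 := (J.psi (eta_J R z x _) (hXJ 0 1) (hw 0 1) n0 X0).max (isLocalMax_line hm _)
  clear key hw hXJ A7 B7 C7 hj
  have hWV := WW_sq (u := u) (x := x)
  have hW1 := WW_one_le (u := u) (x := x)
  have hmain := alg_lower (WW u x) (dd (c, s) u x) H (dd (c, s) (dd (c, s) u) x)
    (dd (-s, c) (dd (c, s) u) x) (dd (-s, c) (dd (-s, c) u) x) a b c' d e0 e1 e2 e3 e4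
    (dd (c, s) (WW u) x) (dd (-s, c) (WW u) x) (dd (c, s) (WW u) x + dd (-s, c) (WW u) x)
    (dd (c, s) (dd (c, s) (WW u)) x) (dd (-s, c) (dd (-s, c) (WW u)) x)
    (dd (c, s) (dd (c, s) (WW u)) x + 2 * dd (-s, c) (dd (c, s) (WW u)) x
      + dd (-s, c) (dd (-s, c) (WW u)) x) hW1 A1.symm (by rw [A1]; linear_combination A4)
    (by linear_combination A2) (by linear_combination B2) (by linear_combination C2)
    (by linear_combination A3) (by linear_combination B3) (by linear_combination C3)
    (by rw [A1]; rw [A1] at A5; linear_combination A5) (by rw [A1]; rw [A1] at B5; linear_combination B5)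
    (by rw [A1]; rw [A1] at A6; linear_combination A6) (by rw [A1]; rw [A1] at B6; linear_combination B6)
    (by rw [A1]; rw [A1] at C6; linear_combination C6) (XX H u x) (dd (c, s) (XX H u) x)
    (dd (-s, c) (XX H u) x) (dd (c, s) (dd (c, s) (XX H u)) x)
    (dd (-s, c) (dd (-s, c) (XX H u)) x) X0 D0.symm (by linear_combination -D1)
    (by linear_combination -G1) (by linear_combination -D2) (by linear_combination -G2)
  simp only [one_mul, zero_mul, add_zero, zero_add, one_pow, mul_zero, mul_one, one_smul, zero_smul,
    ne_eq, OfNat.ofNat_ne_zero, not_false_eq_true, zero_pow] at P1 P2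
  obtain ⟨P1a, P1b⟩ := P1
  obtain ⟨P2a, P2b⟩ := P2
  have hpW : (dd (c, s) u x) ^ 2 ≤ (WW u x) ^ 2 := by rw [A1]; linarith
  have hVW : VV u x ^ 2 = WW u x ^ 4 := by rw [← hWV]; ring
  rw [hVW]
  have heta : eta R z x = R ^ 2 - (((x.1 - z.1) * c + (x.2 - z.2) * s) ^ 2
      + ((x.1 - z.1) * -s + (x.2 - z.2) * c) ^ 2) := by
    rw [eta]; linear_combination ((x.1 - z.1) ^ 2 + (x.2 - z.2) ^ 2) * hcs
  have hcs' : (-s) ^ 2 + c ^ 2 = 1 := by linear_combination hcs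
  rw [hcs] at P1b
  rw [hcs'] at P2b
  clear A1 A2 A3 A4 A5 A6 B1 B2 B3 B4 B5 B6 C1 C2 C3 C4 C5 C6 D0 D1 D2 G0 G1 G2 hWV hVW hcs hcs'
  exact final_ineq hH hR hW1 hpW n0 heta hmain P1a P1b P2b

end CMC

namespace CMC
open scoped Topology ContDiff

/-! ### From curvature to gradient and Hessian bounds -/

variable {U : Set (ℝ × ℝ)} {f g u : ℝ × ℝ → ℝ} {x z e e' : ℝ × ℝ} {H R : ℝ}

lemma continuous_eta : Continuous (eta R z) := by unfold eta; fun_prop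

lemma eta_abs {y : ℝ × ℝ} (hR : 0 ≤ R) (h : 0 ≤ eta R z y) : dist y z ≤ R := by
  unfold eta at h
  rw [Prod.dist_eq, Real.dist_eq, Real.dist_eq]
  apply max_le <;> apply abs_le_of_sq_le_sq _ hR <;>
    nlinarith [sq_nonneg (y.1 - z.1), sq_nonneg (y.2 - z.2)]

lemma isCompact_disc (hR : 0 ≤ R) : IsCompact {y | 0 ≤ eta R z y} := by
  refine (isCompact_closedBall z R).of_isClosed_subset ?_ fun y hy => ?_
  · exact isClosed_le continuous_const continuous_eta
  · exact Metric.mem_closedBall.2 (eta_abs hR hy)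

lemma eta_self : eta R z z = R ^ 2 := by simp [eta]

/-- Interior curvature estimate: on a graph of constant mean curvature `H` over a disc of radius
`R`, the quantity `H² - K` is bounded above the centre by a constant depending only on `H`
and `R`. -/
lemma curvature_est (hH : 0 < H) (hR : 0 < R) (hU : IsOpen U) (hu : IsSol H U u)
    (hD : ∀ y, 0 ≤ eta R z y → y ∈ U) :
    XX H u z / VV u z ^ 2
      ≤ 64 * (26 * H ^ 2 * R ^ 4 + (8 + 8 * H * R) * R ^ 2 + 8 * R ^ 2) / R ^ 4 := by
  have hzU : z ∈ U := hD z (by rw [eta_self]; positivity)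
  by_cases hXz : XX H u z ≤ 0
  · exact (div_nonpos_of_nonpos_of_nonneg hXz (sq_nonneg _)).trans (by positivity)
  push Not at hXz
  set φ : ℝ × ℝ → ℝ := fun y => eta R z y ^ 2 * (XX H u y * WW u y ^ 2 / (1 + WW u y) ^ 6) with hφ
  have hW : ∀ y, 0 < WW u y := fun y => WW_pos
  have hcW : ContinuousOn (WW u) U := (hu.1.WW hU).continuousOn
  have hcX : ContinuousOn (XX H u) U := (hu.1.XX hU).continuousOn
  have hcont : ContinuousOn φ {y | 0 ≤ eta R z y} := by
    have h1 : ContinuousOn φ U := by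
      refine (continuous_eta.continuousOn.pow 2).mul ((hcX.mul (hcW.pow 2)).div
        ((continuousOn_const.add hcW).pow 6) fun y _ => ?_)
      have := hW y
      positivity
    exact h1.mono fun y hy => hD y hy
  obtain ⟨x, hx, hmax⟩ := (isCompact_disc hR.le).exists_isMaxOn (s := {y | 0 ≤ eta R z y})
    ⟨z, by rw [mem_ofPred_eq, eta_self]; positivity⟩ hcont
  have hφz : 0 < φ z := by
    have := hW z
    simp only [hφ, eta_self]; positivity
  have hzx : φ z ≤ φ x := hmax (by rw [mem_ofPred_eq, eta_self]; positivity)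
  have hφx : 0 < φ x := hφz.trans_le hzx
  have hn0 : 0 < eta R z x := by
    refine lt_of_le_of_ne hx fun h => ?_
    simp [hφ, ← h] at hφx
  have hX0 : 0 < XX H u x := by
    by_contra! h
    have := hW x
    have : φ x ≤ 0 := by
      refine mul_nonpos_of_nonneg_of_nonpos (sq_nonneg _)
        (div_nonpos_of_nonpos_of_nonneg (mul_nonpos_of_nonpos_of_nonneg h (by positivity))
          (by positivity))
    linarith
  have hxU := hD x hx
  have hlog : ∀ y, 0 < eta R z y → 0 < XX H u y → psi H R z u y = Real.log (φ y) := by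
    intro y h1 h2
    have := hW y
    rw [hφ, psi, Real.log_mul (by positivity) (by positivity), Real.log_div (by positivity)
      (by positivity), Real.log_mul (by positivity) (by positivity), Real.log_pow, Real.log_pow,
      Real.log_pow]
    push_cast; ring
  have hm : IsLocalMax (psi H R z u) x := by
    have h1 : ∀ᶠ y in 𝓝 x, 0 < eta R z y := continuous_eta.continuousAt.eventually (lt_mem_nhds hn0)
    have h2 : ∀ᶠ y in 𝓝 x, 0 < XX H u y :=
      (hcX.continuousAt (hU.mem_nhds hxU)).eventually (lt_mem_nhds hX0)
    filter_upwards [h1, h2] with y h3 h4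
    rw [hlog y h3 h4, hlog x hn0 hX0]
    have := hW y
    exact Real.log_le_log (by simp only [hφ]; positivity) (hmax h3.le)
  have key := curvature_at_max hH hR hU hu hxU hn0 hX0 hm
  have hform : ∀ y, φ y = eta R z y ^ 2 * (XX H u y / VV u y ^ 2) * (WW u y / (1 + WW u y)) ^ 6 := by
    intro y
    have := hW y
    rw [← WW_sq]; simp only [hφ]; field_simp
  have hup : φ x ≤ eta R z x ^ 2 * (XX H u x / VV u x ^ 2) := by
    rw [hform]
    have := hW x
    refine mul_le_of_le_one_right (by positivity) (pow_le_one₀ (by positivity) ?_)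
    rw [div_le_one (by positivity)]; linarith
  have hlow : R ^ 4 * (XX H u z / VV u z ^ 2) / 64 ≤ φ z := by
    rw [hform, eta_self]
    have := hW z
    have h1 : (1 / 2 : ℝ) ≤ WW u z / (1 + WW u z) := by
      rw [div_le_div_iff₀ (by norm_num) (by positivity)]
      linarith [WW_one_le (u := u) (x := z)]
    have h2 : (1 / 2 : ℝ) ^ 6 ≤ (WW u z / (1 + WW u z)) ^ 6 := by gcongr
    have h3 : 0 ≤ R ^ 4 * (XX H u z / VV u z ^ 2) := by positivity
    calc R ^ 4 * (XX H u z / VV u z ^ 2) / 64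
        = R ^ 4 * (XX H u z / VV u z ^ 2) * (1 / 2 : ℝ) ^ 6 := by ring
      _ ≤ R ^ 4 * (XX H u z / VV u z ^ 2) * (WW u z / (1 + WW u z)) ^ 6 := by gcongr
      _ = _ := by ring
  rw [le_div_iff₀ (by positivity)]
  linarith

/-- The squared norm of the Hessian. -/
def hess2 (u : ℝ × ℝ → ℝ) (x : ℝ × ℝ) : ℝ :=
  (dd dX (dd dX u) x) ^ 2 + 2 * (dd dY (dd dX u) x) ^ 2 + (dd dY (dd dY u) x) ^ 2

/-- Since `2 H` and `K` are the trace and the determinant of the shape operator, `H² - K` controls the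
Hessian up to the factor `W⁶`. -/
lemma hess_le (hu : IsSol H U u) (hx : x ∈ U) :
    hess2 u x ≤ VV u x ^ 3 * (2 * H ^ 2 + 2 * (XX H u x / VV u x ^ 2)) := by
  have hE := hu.2 x hx
  have hV := VV_pos (u := u) (x := x)
  have hW6 : (WW u x ^ 3) ^ 2 = VV u x ^ 3 := by rw [← WW_sq]; ring
  have h1 : VV u x ^ 3 * (2 * H ^ 2 + 2 * (XX H u x / VV u x ^ 2))
      = 2 * H ^ 2 * VV u x ^ 3 + 2 * VV u x * XX H u x := by field_simp
  have h2 : (Lop u u x) ^ 2 = 4 * H ^ 2 * VV u x ^ 3 := by rw [hE, mul_pow, hW6]; ring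
  have h3 : 2 * H ^ 2 * VV u x ^ 3 + 2 * VV u x * XX H u x
      = (Lop u u x) ^ 2 - 2 * VV u x * (dd dX (dd dX u) x * dd dY (dd dY u) x
        - (dd dY (dd dX u) x) ^ 2) := by rw [h2, XX]; ring
  rw [h1, h3, hess2, Lop, VV]
  generalize dd dX u x = p
  generalize dd dY u x = q
  generalize dd dX (dd dX u) x = r
  generalize dd dY (dd dX u) x = s
  generalize dd dY (dd dY u) x = t
  -- with `τ = (q, -p)` and `M` the Hessian, the difference is `2|Mτ|² + (τ·Mτ)²`
  nlinarith [sq_nonneg (q * r - p * s), sq_nonneg (q * s - p * t),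
    sq_nonneg (q ^ 2 * r - 2 * p * q * s + p ^ 2 * t)]

lemma fderiv_le {C : ℝ} (h1 : |dd dX f x| ≤ C) (h2 : |dd dY f x| ≤ C) :
    ‖fderiv ℝ f x‖ ≤ 2 * C := by
  have hC : 0 ≤ C := (abs_nonneg _).trans h1
  refine ContinuousLinearMap.opNorm_le_bound _ (by positivity) fun v => ?_
  have : fderiv ℝ f x v = v.1 * dd dX f x + v.2 * dd dY f x := dd_frame v.1 v.2
  rw [this, Real.norm_eq_abs]
  have a1 : |v.1| ≤ ‖v‖ := norm_fst_le v
  have a2 : |v.2| ≤ ‖v‖ := norm_snd_le v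
  calc |v.1 * dd dX f x + v.2 * dd dY f x| ≤ |v.1| * |dd dX f x| + |v.2| * |dd dY f x| := by
        rw [← abs_mul, ← abs_mul]; exact abs_add_le _ _
    _ ≤ ‖v‖ * C + ‖v‖ * C := by gcongr
    _ = _ := by ring

lemma dd_inv_VV (hU : IsOpen U) (hu : Sm U u) (hx : x ∈ U) (e : ℝ × ℝ) :
    dd e (fun y => (VV u y)⁻¹) x
      = -(2 * (dd dX u x * dd e (dd dX u) x + dd dY u x * dd e (dd dY u) x)) / (VV u x) ^ 2 := by
  have hV := VV_pos (u := u) (x := x)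
  have hp := (hu.dd hU dX).J hU hx e
  have hq := (hu.dd hU dY).J hU hx e
  have h1 := ((J.const 1).add (hp.mul hp)).add (hq.mul hq)
  have h2 := ((hu.VV hU).J hU hx e).congr (G := fun t => 1 + dd dX u (x + t • e) * dd dX u (x + t • e)
    + dd dY u (x + t • e) * dd dY u (x + t • e)) (Eventually.of_forall fun t => by
      simp only [VV]; ring)
  have h3 := (h1.unique h2).2.1
  have h4 := ((hu.VV hU).diff hU hx).hasFDerivAt
  have h5 : fderiv ℝ (fun y => (VV u y)⁻¹) x = -(VV u x ^ 2)⁻¹ • fderiv ℝ (VV u) x := by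
    have := (hasDerivAt_inv hV.ne').comp_hasFDerivAt x h4
    exact this.fderiv
  have h6 : dd e (fun y => (VV u y)⁻¹) x = -(VV u x ^ 2)⁻¹ * dd e (VV u) x := by
    simp only [dd, h5]; rfl
  rw [h6, ← h3]; field_simp; ring

/-- If the Hessian is at most of size `W³`, then `1/W²` has bounded gradient. -/
lemma abs_dd_inv_VV {K : ℝ} (hU : IsOpen U) (hu : Sm U u) (hx : x ∈ U)
    (hK : hess2 u x ≤ VV u x ^ 3 * K) (hK0 : 0 ≤ K) :
    ‖fderiv ℝ (fun y => (VV u y)⁻¹) x‖ ≤ 4 * √K := by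
  have hV := VV_pos (u := u) (x := x)
  have hs := Real.sq_sqrt hK0
  have hs0 := Real.sqrt_nonneg K
  -- Cauchy-Schwarz for the gradient against a column of the Hessian
  have gen : ∀ a b : ℝ, a ^ 2 + b ^ 2 ≤ hess2 u x →
      |-(2 * (dd dX u x * a + dd dY u x * b)) / (VV u x) ^ 2| ≤ 2 * √K := by
    intro a b hab
    rw [abs_div, abs_of_pos (show 0 < VV u x ^ 2 by positivity), div_le_iff₀ (by positivity)]
    refine abs_le_of_sq_le_sq ?_ (by positivity)
    have h1 : (dd dX u x * a + dd dY u x * b) ^ 2 ≤ VV u x * (a ^ 2 + b ^ 2) := by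
      unfold VV
      nlinarith [sq_nonneg (dd dX u x * b - dd dY u x * a), sq_nonneg a, sq_nonneg b]
    have h2 : VV u x * (a ^ 2 + b ^ 2) ≤ VV u x * (VV u x ^ 3 * K) := by
      gcongr; exact hab.trans hK
    have h3 : (2 * √K * VV u x ^ 2) ^ 2 = 4 * (VV u x * (VV u x ^ 3 * K)) := by
      rw [mul_pow, mul_pow, hs]; ring
    rw [h3]; nlinarith
  have := fderiv_le (f := fun y => (VV u y)⁻¹) (x := x) (C := 2 * √K)
    (by
      rw [dd_inv_VV hU hu hx]; apply gen
      rw [dd_comm (e := dX) (e' := dY) hU hu hx]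
      unfold hess2
      nlinarith [sq_nonneg (dd dY (dd dX u) x), sq_nonneg (dd dY (dd dY u) x)])
    (by
      rw [dd_inv_VV hU hu hx]; apply gen
      unfold hess2
      nlinarith [sq_nonneg (dd dY (dd dX u) x), sq_nonneg (dd dX (dd dX u) x)])
  linarith

/-- A bound for the gradient at one point propagates to a neighbourhood of definite size, together
with a bound for the Hessian. -/
lemma grad_hess_bound (hH : 0 < H) {ρ : ℝ} (hρ : 0 < ρ) (M : ℝ) :
    ∃ r > 0, r ≤ ρ ∧ ∃ C, ∀ (U : Set (ℝ × ℝ)) (u : ℝ × ℝ → ℝ) (z : ℝ × ℝ), IsOpen U → IsSol H U u →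
      Metric.closedBall z ρ ⊆ U → VV u z ≤ M →
        ∀ y ∈ Metric.ball z r, VV u y ≤ C ∧ hess2 u y ≤ C := by
  set R := ρ / 2 with hR
  have hR0 : 0 < R := by positivity
  set K := 2 * H ^ 2 + 2 * (64 * (26 * H ^ 2 * R ^ 4 + (8 + 8 * H * R) * R ^ 2 + 8 * R ^ 2) / R ^ 4)
    with hK
  have hK0 : 0 < K := by positivity
  set M' := max M 1 with hM'
  have hM1 : 1 ≤ M' := le_max_right _ _
  have hs := Real.sqrt_pos.2 hK0
  refine ⟨min R (1 / (8 * M' * √K)), by positivity, (min_le_left _ _).trans (by linarith),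
    max (2 * M') ((2 * M') ^ 3 * K), ?_⟩
  intro U u z hU hu hB hz y hy
  have hsub : ∀ y ∈ Metric.ball z R, y ∈ U ∧ hess2 u y ≤ VV u y ^ 3 * K := by
    intro y hy
    have hyz : dist y z < R := hy
    have hD : ∀ w, 0 ≤ eta R y w → w ∈ U := fun w hw => hB (by
      rw [Metric.mem_closedBall]
      have := eta_abs hR0.le hw
      linarith [dist_triangle w y z])
    have hyU : y ∈ U := hD y (by rw [eta_self]; positivity)
    refine ⟨hyU, (hess_le hu hyU).trans ?_⟩
    have hV := VV_pos (u := u) (x := y)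
    have := curvature_est hH hR0 hU hu hD
    rw [hK]; gcongr
  have hy1 : dist y z < R := lt_of_lt_of_le hy (min_le_left _ _)
  have hy2 : dist y z ≤ 1 / (8 * M' * √K) := (lt_of_lt_of_le hy (min_le_right _ _)).le
  have hLip := (convex_ball z R).norm_image_sub_le_of_norm_fderiv_le (𝕜 := ℝ)
    (f := fun y => (VV u y)⁻¹) (C := 4 * √K) (x := y) (y := z)
    (fun w hw => ((hu.1.VV hU).inv fun _ _ => VV_pos.ne').diff hU (hsub w hw).1)
    (fun w hw => abs_dd_inv_VV hU hu.1 (hsub w hw).1 (hsub w hw).2 hK0.le)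
    hy1 (Metric.mem_ball_self hR0)
  have hVz := VV_pos (u := u) (x := z)
  have hVy := VV_pos (u := u) (x := y)
  have h1 : (VV u z)⁻¹ - (VV u y)⁻¹ ≤ 1 / (2 * M') := by
    calc (VV u z)⁻¹ - (VV u y)⁻¹ ≤ ‖(VV u z)⁻¹ - (VV u y)⁻¹‖ := le_abs_self _
      _ ≤ 4 * √K * ‖z - y‖ := hLip
      _ = 4 * √K * dist y z := by rw [dist_comm, dist_eq_norm]
      _ ≤ 4 * √K * (1 / (8 * M' * √K)) := by gcongr
      _ = 1 / (2 * M') := by field_simp; norm_num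
  have h2 : 1 / M' ≤ (VV u z)⁻¹ := by
    rw [one_div]; exact inv_anti₀ hVz (hz.trans (le_max_left _ _))
  have h3 : 1 / (2 * M') ≤ (VV u y)⁻¹ := by
    have : 1 / M' = 1 / (2 * M') + 1 / (2 * M') := by field_simp; norm_num
    linarith
  have h4 : VV u y ≤ 2 * M' := by
    rw [one_div] at h3
    exact (inv_le_inv₀ (by positivity) hVy).1 h3
  refine ⟨h4.trans (le_max_left _ _), (hsub y hy1).2.trans (le_trans ?_ (le_max_right _ _))⟩
  gcongr

end CMC

namespace CMC
open scoped Topology ContDiff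

/-! ### Bernstein's estimate for systems with quadratic growth -/

variable {U : Set (ℝ × ℝ)} {f g u : ℝ × ℝ → ℝ} {x z e e' : ℝ × ℝ} {H R C : ℝ}
variable {ι : Type} {w : ι → ℝ × ℝ → ℝ}

/-- The gradient of `u` at `x` turned by a right angle; `a^{ij}(∇u) ∂_{ij}` is the sum of the
second derivatives in the directions `dX`, `dY` and `tau u x`. -/
def tau (u : ℝ × ℝ → ℝ) (x : ℝ × ℝ) : ℝ × ℝ := (dd dY u x, -dd dX u x)

lemma Lop_eq (hU : IsOpen U) (hf : Sm U f) (hx : x ∈ U) :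
    Lop u f x = dd dX (dd dX f) x + dd dY (dd dY f) x + dd (tau u x) (dd (tau u x) f) x := by
  have := dd2_frame hU hf hx (dd dY u x) (-dd dX u x) (dd dY u x) (-dd dX u x)
  rw [tau, this, Lop]; ring

lemma dd_tau : dd (tau u x) f x = dd dY u x * dd dX f x - dd dX u x * dd dY f x := by
  rw [tau, dd_frame]; ring

lemma dd_sq (hU : IsOpen U) (hf : Sm U f) (hx : x ∈ U) (v : ℝ × ℝ) :
    dd v (fun y => f y ^ 2) x = 2 * f x * dd v f x ∧
    dd v (dd v (fun y => f y ^ 2)) x = 2 * f x * dd v (dd v f) x + 2 * (dd v f x) ^ 2 := by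
  have h1 := ((hf.pow 2).J hU hx v)
  have h2 := (hf.J hU hx v).mul (hf.J hU hx v)
  have h3 := h1.unique (h2.congr (Eventually.of_forall fun t => by simp only; ring))
  exact ⟨by rw [h3.2.1]; ring, by rw [h3.2.2]; ring⟩

lemma dd_sum {s : Finset ι} (hU : IsOpen U) (hw : ∀ i, Sm U (w i)) (hx : x ∈ U) (v : ℝ × ℝ) :
    dd v (fun y => ∑ i ∈ s, w i y) x = ∑ i ∈ s, dd v (w i) x ∧
    dd v (dd v (fun y => ∑ i ∈ s, w i y)) x = ∑ i ∈ s, dd v (dd v (w i)) x := by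
  have h1 := ((Sm.sum fun i (_ : i ∈ s) => hw i).J hU hx v)
  have h2 := J.sum fun i (_ : i ∈ s) => (hw i).J hU hx v
  exact (h1.unique h2).2

variable [Fintype ι]

lemma Lop_sum (hU : IsOpen U) (hw : ∀ i, Sm U (w i)) (hx : x ∈ U) :
    Lop u (fun y => ∑ i, w i y) x = ∑ i, Lop u (w i) x := by
  rw [Lop_eq hU (Sm.sum fun i _ => hw i) hx, (dd_sum hU hw hx _).2, (dd_sum hU hw hx _).2,
    (dd_sum hU hw hx _).2, ← Finset.sum_add_distrib, ← Finset.sum_add_distrib]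
  exact Finset.sum_congr rfl fun i _ => (Lop_eq hU (hw i) hx).symm

lemma Lop_add (hU : IsOpen U) (hf : Sm U f) (hg : Sm U g) (hx : x ∈ U) :
    Lop u (fun y => f y + g y) x = Lop u f x + Lop u g x := by
  have h : ∀ v, dd v (dd v (fun y => f y + g y)) x = dd v (dd v f) x + dd v (dd v g) x := fun v =>
    (((hf.add hg).J hU hx v).unique ((hf.J hU hx v).add (hg.J hU hx v))).2.2
  rw [Lop_eq hU (hf.add hg) hx, Lop_eq hU hf hx, Lop_eq hU hg hx, h, h, h]; ring

lemma Lop_sq (hU : IsOpen U) (hf : Sm U f) (hx : x ∈ U) :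
    Lop u (fun y => f y ^ 2) x = 2 * f x * Lop u f x
      + 2 * ((dd dX f x) ^ 2 + (dd dY f x) ^ 2 + (dd (tau u x) f x) ^ 2) := by
  rw [Lop_eq hU (hf.pow 2) hx, Lop_eq hU hf hx, (dd_sq hU hf hx _).2, (dd_sq hU hf hx _).2,
    (dd_sq hU hf hx _).2]; ring

/-- Commutator of `a^{ij}(∇u) ∂_{ij}` with a constant coefficient derivative. -/
lemma Lop_dd (hU : IsOpen U) (hu : Sm U u) (hf : Sm U f) (hx : x ∈ U) (e : ℝ × ℝ) :
    Lop u (dd e f) x = dd e (Lop u f) x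
      - (2 * dd dY u x * dd e (dd dY u) x * dd dX (dd dX f) x
        - 2 * (dd e (dd dX u) x * dd dY u x + dd dX u x * dd e (dd dY u) x) * dd dY (dd dX f) x
        + 2 * dd dX u x * dd e (dd dX u) x * dd dY (dd dY f) x) := by
  have hp := (hu.dd hU dX).J hU hx e
  have hq := (hu.dd hU dY).J hU hx e
  have h1 := ((hf.dd hU dX).dd hU dX).J hU hx e
  have h2 := ((hf.dd hU dX).dd hU dY).J hU hx e
  have h3 := ((hf.dd hU dY).dd hU dY).J hU hx e
  have hL : Sm U (Lop u f) :=
    ((((Sm.const 1).add ((hu.dd hU dY).pow 2)).mul ((hf.dd hU dX).dd hU dX)).sub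
      ((((Sm.const 2).mul (hu.dd hU dX)).mul (hu.dd hU dY)).mul ((hf.dd hU dX).dd hU dY))).add
      (((Sm.const 1).add ((hu.dd hU dX).pow 2)).mul ((hf.dd hU dY).dd hU dY))
  have h4 := (((((J.const 1).add (hq.mul hq)).mul h1).sub (((hp.mul hq).mul h2).smul 2)).add
    (((J.const 1).add (hp.mul hp)).mul h3))
  have h5 := ((hL.J hU hx e).unique (h4.congr (Eventually.of_forall fun t => by
    simp only [Lop]; ring))).2.1
  have c1 : ∀ a b : ℝ × ℝ, dd a (dd b (dd e f)) x = dd e (dd a (dd b f)) x := by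
    intro a b
    rw [dd_congr hU (fun y hy => dd_comm (e := b) (e' := e) hU hf hy) hx,
      dd_comm (e := a) (e' := e) hU (hf.dd hU b) hx]
  rw [h5, Lop, c1, c1, c1]
  ring

/-- Sum of the squared gradients of a finite family. -/
def FF (w : ι → ℝ × ℝ → ℝ) (x : ℝ × ℝ) : ℝ := ∑ i, ((dd dX (w i) x) ^ 2 + (dd dY (w i) x) ^ 2)
/-- Sum of the squares of a finite family. -/
def GG (w : ι → ℝ × ℝ → ℝ) (x : ℝ × ℝ) : ℝ := ∑ i, (w i x) ^ 2
/-- Sum of the squared Hessians of a finite family. -/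
def QQ (w : ι → ℝ × ℝ → ℝ) (x : ℝ × ℝ) : ℝ := ∑ i, hess2 (w i) x

lemma Sm.FF (hU : IsOpen U) (hw : ∀ i, Sm U (w i)) : Sm U (FF w) :=
  Sm.sum fun i _ => (((hw i).dd hU dX).pow 2).add (((hw i).dd hU dY).pow 2)
lemma Sm.GG (hw : ∀ i, Sm U (w i)) : Sm U (GG w) := Sm.sum fun i _ => (hw i).pow 2
lemma FF_nonneg : 0 ≤ FF w x := Finset.sum_nonneg fun _ _ => by positivity
lemma GG_nonneg : 0 ≤ GG w x := Finset.sum_nonneg fun _ _ => by positivity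
lemma hess2_nonneg : 0 ≤ hess2 f x := by unfold hess2; positivity
lemma QQ_nonneg : 0 ≤ QQ w x := Finset.sum_nonneg fun i _ => hess2_nonneg

lemma grad_le_FF (i : ι) : (dd dX (w i) x) ^ 2 + (dd dY (w i) x) ^ 2 ≤ FF w x :=
  Finset.single_le_sum (f := fun i => (dd dX (w i) x) ^ 2 + (dd dY (w i) x) ^ 2)
    (fun _ _ => by positivity) (Finset.mem_univ i)

lemma hess_le_QQ (i : ι) : hess2 (w i) x ≤ QQ w x :=
  Finset.single_le_sum (f := fun i => hess2 (w i) x) (fun i _ => hess2_nonneg) (Finset.mem_univ i)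

lemma abs_le_sqrt' {a b : ℝ} (h : a ^ 2 ≤ b) : |a| ≤ √b := Real.abs_le_sqrt h

/-- The hypotheses of the Bernstein estimate at a point: bounds for the coefficients, for the
functions `w i`, and growth conditions for `L (w i)`. -/
structure BHyp (C : ℝ) (u : ℝ × ℝ → ℝ) (w : ι → ℝ × ℝ → ℝ) (x : ℝ × ℝ) : Prop where
  p : |dd dX u x| ≤ C
  q : |dd dY u x| ≤ C
  r : |dd dX (dd dX u) x| ≤ C
  s : |dd dY (dd dX u) x| ≤ C
  t : |dd dY (dd dY u) x| ≤ C
  wb : ∀ i, |w i x| ≤ C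
  L : ∀ i, |Lop u (w i) x| ≤ C * (1 + √(FF w x))
  LX : ∀ i, |dd dX (Lop u (w i)) x| ≤ C * (1 + FF w x + √(QQ w x))
  LY : ∀ i, |dd dY (Lop u (w i)) x| ≤ C * (1 + FF w x + √(QQ w x))

lemma comm_bound {p q a b r s t S : ℝ} (hp : |p| ≤ C) (hq : |q| ≤ C) (ha : |a| ≤ C) (hb : |b| ≤ C)
    (hr : |r| ≤ S) (hs : |s| ≤ S) (ht : |t| ≤ S) :
    |2 * q * b * r - 2 * (a * q + p * b) * s + 2 * p * a * t| ≤ 8 * C ^ 2 * S := by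
  have C0 : 0 ≤ C := (abs_nonneg _).trans hp
  have h : ∀ a b c : ℝ, |a| ≤ C → |b| ≤ C → |c| ≤ S → |a * b * c| ≤ C * C * S := by
    intro a b c h1 h2 h3
    rw [abs_mul, abs_mul]; gcongr
  have h1 := abs_le.1 (h q b r hq hb hr)
  have h2 := abs_le.1 (h a q s ha hq hs)
  have h3 := abs_le.1 (h p b s hp hb hs)
  have h4 := abs_le.1 (h p a t hp ha ht)
  rw [abs_le]; constructor <;> nlinarith

/-- The growth condition for `∂ (L w)` passes to `L (∂ w)`, as the commutator only involves second
derivatives of `w`. -/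
lemma Ldd_bound (hC : 1 ≤ C) (hU : IsOpen U) (hu : Sm U u) (hw : ∀ i, Sm U (w i)) (hx : x ∈ U)
    (h : BHyp C u w x) (i : ι) :
    |Lop u (dd dX (w i)) x| ≤ 9 * C ^ 2 * (1 + FF w x + √(QQ w x)) ∧
    |Lop u (dd dY (w i)) x| ≤ 9 * C ^ 2 * (1 + FF w x + √(QQ w x)) := by
  have hQ := hess_le_QQ (x := x) (w := w) i
  have hF := FF_nonneg (x := x) (w := w)
  have hS := Real.sqrt_nonneg (QQ w x)
  unfold hess2 at hQ
  have k1 : |dd dX (dd dX (w i)) x| ≤ √(QQ w x) := abs_le_sqrt' (by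
    nlinarith [sq_nonneg (dd dY (dd dX (w i)) x), sq_nonneg (dd dY (dd dY (w i)) x)])
  have k2 : |dd dY (dd dX (w i)) x| ≤ √(QQ w x) := abs_le_sqrt' (by
    nlinarith [sq_nonneg (dd dX (dd dX (w i)) x), sq_nonneg (dd dY (dd dY (w i)) x),
      sq_nonneg (dd dY (dd dX (w i)) x)])
  have k3 : |dd dY (dd dY (w i)) x| ≤ √(QQ w x) := abs_le_sqrt' (by
    nlinarith [sq_nonneg (dd dY (dd dX (w i)) x), sq_nonneg (dd dX (dd dX (w i)) x)])
  have s' : |dd dX (dd dY u) x| ≤ C := by rw [dd_comm hU hu hx]; exact h.s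
  have hCC : C ≤ C ^ 2 := by nlinarith
  have fin : C * (1 + FF w x + √(QQ w x)) + 8 * C ^ 2 * √(QQ w x)
      ≤ 9 * C ^ 2 * (1 + FF w x + √(QQ w x)) := by
    have a1 : C * (1 + FF w x + √(QQ w x)) ≤ C ^ 2 * (1 + FF w x + √(QQ w x)) := by gcongr
    have a2 : 0 ≤ C ^ 2 * (1 + FF w x) := by positivity
    nlinarith
  constructor
  · rw [Lop_dd hU hu (hw i) hx]
    exact (abs_sub _ _).trans ((add_le_add (h.LX i) (comm_bound h.p h.q h.r s' k1 k2 k3)).trans fin)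
  · rw [Lop_dd hU hu (hw i) hx]
    exact (abs_sub _ _).trans ((add_le_add (h.LY i) (comm_bound h.p h.q h.s h.t k1 k2 k3)).trans fin)

end CMC

namespace CMC
open scoped Topology ContDiff

/-! ### Differential inequalities for the Bernstein function -/

variable {U : Set (ℝ × ℝ)} {f g u : ℝ × ℝ → ℝ} {x z e e' : ℝ × ℝ} {H R C : ℝ}
variable {ι : Type} [Fintype ι] {w : ι → ℝ × ℝ → ℝ}

lemma sum_abs_bound {a : ι → ℝ} {B : ℝ} (h : ∀ i, -B ≤ a i) :
    -(Fintype.card ι * B) ≤ ∑ i, a i := by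
  have := Finset.card_nsmul_le_sum Finset.univ a (-B) fun i _ => h i
  simpa using this

/-- `L |∇w|²` contains the term `2 a^{ij} ∂_i ∇w · ∂_j ∇w ≥ 2 |D²w|²`, which absorbs the second derivatives
in the remaining terms; what is left is of order `|∇w|³`. -/
lemma LF_lower (hC : 1 ≤ C) (hU : IsOpen U) (hu : Sm U u) (hw : ∀ i, Sm U (w i)) (hx : x ∈ U)
    (h : BHyp C u w x) (hF1 : 1 ≤ FF w x) {N : ℝ} (hN : (Fintype.card ι : ℝ) ≤ N) :
    -((72 * N * C ^ 2 + (18 * N * C ^ 2) ^ 2) * (FF w x * √(FF w x))) ≤ Lop u (FF w) x := by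
  set F := FF w x with hF
  set Q := QQ w x with hQ
  have hF0 : 0 ≤ F := by linarith
  have hQ0 : 0 ≤ Q := QQ_nonneg
  have hsF := Real.sqrt_nonneg F
  have hsQ := Real.sqrt_nonneg Q
  have sF := Real.sq_sqrt hF0
  have sQ := Real.sq_sqrt hQ0
  have hN0 : (0 : ℝ) ≤ N := (Nat.cast_nonneg _).trans hN
  set B := 36 * C ^ 2 * (√F * (1 + F + √Q)) with hB
  have hB0 : 0 ≤ B := by positivity
  have e1 : Lop u (FF w) x = ∑ i, (Lop u (fun y => (dd dX (w i) y) ^ 2) x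
      + Lop u (fun y => (dd dY (w i) y) ^ 2) x) := by
    have := Lop_sum (u := u) (w := fun i y => (dd dX (w i) y) ^ 2 + (dd dY (w i) y) ^ 2) hU
      (fun i => (((hw i).dd hU dX).pow 2).add (((hw i).dd hU dY).pow 2)) hx
    refine this.trans (Finset.sum_congr rfl fun i _ => ?_)
    exact Lop_add hU (((hw i).dd hU dX).pow 2) (((hw i).dd hU dY).pow 2) hx
  have e2 : ∀ i, -B ≤ Lop u (fun y => (dd dX (w i) y) ^ 2) x
      + Lop u (fun y => (dd dY (w i) y) ^ 2) x - 2 * hess2 (w i) x := by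
    intro i
    rw [Lop_sq hU ((hw i).dd hU dX) hx, Lop_sq hU ((hw i).dd hU dY) hx]
    obtain ⟨b1, b2⟩ := Ldd_bound hC hU hu hw hx h i
    have g := grad_le_FF (w := w) (x := x) i
    have g1 : |dd dX (w i) x| ≤ √F := abs_le_sqrt' (by nlinarith [sq_nonneg (dd dY (w i) x)])
    have g2 : |dd dY (w i) x| ≤ √F := abs_le_sqrt' (by nlinarith [sq_nonneg (dd dX (w i) x)])
    have m1 : |dd dX (w i) x * Lop u (dd dX (w i)) x| ≤ √F * (9 * C ^ 2 * (1 + F + √Q)) := by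
      rw [abs_mul]; gcongr
    have m2 : |dd dY (w i) x * Lop u (dd dY (w i)) x| ≤ √F * (9 * C ^ 2 * (1 + F + √Q)) := by
      rw [abs_mul]; gcongr
    have m1' := (abs_le.1 m1).1
    have m2' := (abs_le.1 m2).1
    have hs : dd dX (dd dY (w i)) x = dd dY (dd dX (w i)) x := dd_comm hU (hw i) hx
    rw [hs, hess2, hB]
    nlinarith [sq_nonneg (dd (tau u x) (dd dX (w i)) x), sq_nonneg (dd (tau u x) (dd dY (w i)) x)]
  have e3 := sum_abs_bound e2
  rw [Finset.sum_sub_distrib, ← Finset.mul_sum, ← e1] at e3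
  have e4 : ∑ i, hess2 (w i) x = Q := rfl
  rw [e4] at e3
  have e5 : (Fintype.card ι : ℝ) * B ≤ N * B := by gcongr
  have hsF1 : 1 ≤ √F := Real.one_le_sqrt.2 hF1
  -- absorb the term `√F √Q` into `Q`
  have e6 : 36 * N * C ^ 2 * (√F * √Q) ≤ Q + (18 * N * C ^ 2) ^ 2 * F := by
    nlinarith [sq_nonneg (√Q - 18 * N * C ^ 2 * √F)]
  have e7 : √F ≤ F * √F := le_mul_of_one_le_left hsF hF1
  have e8 : F ≤ F * √F := le_mul_of_one_le_right hF0 hsF1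
  have e9 : N * C ^ 2 * √F ≤ N * C ^ 2 * (F * √F) := by gcongr
  have e10 : (18 * N * C ^ 2) ^ 2 * F ≤ (18 * N * C ^ 2) ^ 2 * (F * √F) := by gcongr
  have e11 : N * B = 36 * (N * C ^ 2 * √F) + 36 * (N * C ^ 2 * (F * √F))
    + 36 * N * C ^ 2 * (√F * √Q) := by rw [hB]; ring
  nlinarith

/-- `L |w|²` is bounded below by `|∇w|²` up to a constant, by ellipticity. -/
lemma LG_lower (hC : 1 ≤ C) (hU : IsOpen U) (hw : ∀ i, Sm U (w i)) (hx : x ∈ U)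
    (h : BHyp C u w x) {N : ℝ} (hN : (Fintype.card ι : ℝ) ≤ N) :
    FF w x - (2 * N * C ^ 2 + N ^ 2 * C ^ 4) ≤ Lop u (GG w) x := by
  set F := FF w x with hF
  have hF0 : 0 ≤ F := FF_nonneg
  have hsF := Real.sqrt_nonneg F
  have sF := Real.sq_sqrt hF0
  have hN0 : (0 : ℝ) ≤ N := (Nat.cast_nonneg _).trans hN
  have e1 : Lop u (GG w) x = ∑ i, Lop u (fun y => (w i y) ^ 2) x :=
    Lop_sum hU (fun i => (hw i).pow 2) hx
  have e2 : ∀ i, -(2 * C ^ 2 * (1 + √F)) ≤ Lop u (fun y => (w i y) ^ 2) x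
      - 2 * ((dd dX (w i) x) ^ 2 + (dd dY (w i) x) ^ 2) := by
    intro i
    rw [Lop_sq hU (hw i) hx]
    have m1 : |w i x * Lop u (w i) x| ≤ C * (C * (1 + √F)) := by
      rw [abs_mul]; exact mul_le_mul (h.wb i) (h.L i) (abs_nonneg _) (by linarith)
    have m2 := (abs_le.1 m1).1
    nlinarith [sq_nonneg (dd (tau u x) (w i) x)]
  have e3 := sum_abs_bound e2
  rw [Finset.sum_sub_distrib, ← Finset.mul_sum, ← e1] at e3
  have e4 : ∑ i, ((dd dX (w i) x) ^ 2 + (dd dY (w i) x) ^ 2) = F := rfl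
  rw [e4] at e3
  have e5 : (Fintype.card ι : ℝ) * (2 * C ^ 2 * (1 + √F)) ≤ N * (2 * C ^ 2 * (1 + √F)) := by gcongr
  nlinarith [sq_nonneg (√F - N * C ^ 2)]

lemma dd_GG (hU : IsOpen U) (hw : ∀ i, Sm U (w i)) (hx : x ∈ U) (v : ℝ × ℝ) :
    (dd v (GG w) x) ^ 2 ≤ 4 * GG w x * ∑ i, (dd v (w i) x) ^ 2 := by
  have h1 : dd v (GG w) x = ∑ i, 2 * (w i x * dd v (w i) x) := by
    refine ((dd_sum hU (fun i => (hw i).pow 2) hx v).1).trans (Finset.sum_congr rfl fun i _ => ?_)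
    rw [(dd_sq hU (hw i) hx v).1]; ring
  rw [h1, ← Finset.mul_sum, mul_pow]
  have := Finset.sum_mul_sq_le_sq_mul_sq Finset.univ (fun i => w i x) (fun i => dd v (w i) x)
  unfold GG
  nlinarith

/-- The derivatives of `|w|²` along the directions that make up `L` are controlled by `|w| |∇w|`. -/
lemma BG_upper (hU : IsOpen U) (hw : ∀ i, Sm U (w i)) (hx : x ∈ U)
    (h : BHyp C u w x) : (dd dX (GG w) x) ^ 2 + (dd dY (GG w) x) ^ 2 + (dd (tau u x) (GG w) x) ^ 2
      ≤ 4 * GG w x * ((1 + 2 * C ^ 2) * FF w x) := by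
  have h1 := dd_GG hU hw hx dX
  have h2 := dd_GG hU hw hx dY
  have h3 := dd_GG hU hw hx (tau u x)
  have hp : (dd dX u x) ^ 2 ≤ C ^ 2 := sq_le_sq' (abs_le.1 h.p).1 (abs_le.1 h.p).2
  have hq : (dd dY u x) ^ 2 ≤ C ^ 2 := sq_le_sq' (abs_le.1 h.q).1 (abs_le.1 h.q).2
  have h4 : ∑ i, (dd dX (w i) x) ^ 2 + ∑ i, (dd dY (w i) x) ^ 2 + ∑ i, (dd (tau u x) (w i) x) ^ 2
      ≤ (1 + 2 * C ^ 2) * FF w x := by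
    rw [← Finset.sum_add_distrib, ← Finset.sum_add_distrib, FF, Finset.mul_sum]
    refine Finset.sum_le_sum fun i _ => ?_
    rw [dd_tau]
    have a1 : ((dd dX u x) ^ 2 + (dd dY u x) ^ 2) * ((dd dX (w i) x) ^ 2 + (dd dY (w i) x) ^ 2)
        ≤ (C ^ 2 + C ^ 2) * ((dd dX (w i) x) ^ 2 + (dd dY (w i) x) ^ 2) := by gcongr
    nlinarith [sq_nonneg (dd dX u x * dd dX (w i) x + dd dY u x * dd dY (w i) x)]
  have hG := GG_nonneg (w := w) (x := x)
  have h5 : 4 * GG w x * (∑ i, (dd dX (w i) x) ^ 2 + ∑ i, (dd dY (w i) x) ^ 2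
      + ∑ i, (dd (tau u x) (w i) x) ^ 2) ≤ 4 * GG w x * ((1 + 2 * C ^ 2) * FF w x) := by gcongr
  linarith

lemma GG_upper (h : BHyp C u w x) {N : ℝ} (hN : (Fintype.card ι : ℝ) ≤ N) :
    GG w x ≤ N * C ^ 2 := by
  have : GG w x ≤ Fintype.card ι * C ^ 2 := by
    have := Finset.sum_le_card_nsmul Finset.univ (fun i => (w i x) ^ 2) (C ^ 2) fun i _ =>
      sq_le_sq' (abs_le.1 (h.wb i)).1 (abs_le.1 (h.wb i)).2
    simpa [GG] using this
  exact this.trans (by gcongr)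

end CMC

namespace CMC
open scoped Topology ContDiff

/-! ### The Bernstein function at a maximum point -/

variable {U : Set (ℝ × ℝ)} {f g u : ℝ × ℝ → ℝ} {x z e e' : ℝ × ℝ} {H R C : ℝ}
variable {ι : Type} [Fintype ι] {w : ι → ℝ × ℝ → ℝ}

/-- First and second order conditions at a maximum of `2 log η + log F + log (K + G)` along one
direction, with the derivative of `log F` eliminated.  Here `n` and `n2` are
the first and second derivatives of `η` divided by `η`, and similarly for `F` and `K + G`. -/
lemma bern_dir {n n2 F1 F2 G1 G2 : ℝ} (h1 : 2 * n + (F1 + G1) = 0)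
    (h2 : 2 * (n2 - n ^ 2) + ((F2 - F1 ^ 2) + (G2 - G1 ^ 2)) ≤ 0) :
    2 * n2 + F2 + G2 ≤ 10 * n ^ 2 + 3 * G1 ^ 2 := by
  have : F1 = -(2 * n + G1) := by linarith
  rw [this] at h2
  nlinarith [sq_nonneg (2 * n - G1)]

/-- The final inequality of Bernstein's method at a maximum of `η² F (K + G)`.  The good term
`F / (K + G)` from `L G` dominates `BG / (K + G)²` because `K` is large compared with `G`, and dominates
`√F` from `L F` after multiplication by `η²`. -/
lemma bern_real {η F G K K2 ρ a b c d Λ Ln Bn LF LG BG : ℝ} (hη : 0 < η) (hηρ : η ≤ ρ) (hF : 1 ≤ F)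
    (hG : 0 ≤ G) (hK : 1 ≤ K) (hK2 : K + G ≤ K2) (ha : 0 ≤ a) (hb : 0 ≤ b) (hc : 0 ≤ c) (hd : 0 ≤ d)
    (hΛ : 24 * G * Λ ≤ K)
    (h : 2 * (Ln / η) + LF / F + LG / (K + G) ≤ 10 * (Bn / η ^ 2) + 3 * (BG / (K + G) ^ 2))
    (hLn : -a ≤ Ln) (hBn : Bn ≤ b) (hLF : -(c * (F * √F)) ≤ LF) (hLG : F - d ≤ LG)
    (hBG : BG ≤ 4 * G * (Λ * F)) :
    η ^ 2 * F ≤ 2 * (2 * K2 * (10 * b + 2 * a * ρ) + 2 * d * ρ ^ 2 + 2 * (K2 * c * ρ) ^ 2) := by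
  have F0 : 0 < F := by linarith
  have K0 : 0 < K + G := by linarith
  have hsF := Real.sqrt_nonneg F
  have sF := Real.sq_sqrt F0.le
  have ρ0 : 0 ≤ ρ := by linarith
  have e1 : -(a / η) ≤ Ln / η := by rw [← neg_div]; gcongr
  have e2 : Bn / η ^ 2 ≤ b / η ^ 2 := by gcongr
  have e3 : -(c * √F) ≤ LF / F := by rw [le_div_iff₀ F0]; linarith
  have e4 : (F - d) / (K + G) ≤ LG / (K + G) := by gcongr
  have e5 : 3 * (BG / (K + G) ^ 2) ≤ F / (2 * (K + G)) := by
    have : 3 * (BG / (K + G) ^ 2) = (3 * BG / (K + G)) / (K + G) := by field_simp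
    have h2 : 3 * BG / (K + G) ≤ F / 2 := by
      rw [div_le_iff₀ K0]
      have : 24 * G * Λ * F ≤ K * F := by gcongr
      nlinarith
    rw [this]
    calc (3 * BG / (K + G)) / (K + G) ≤ (F / 2) / (K + G) := by gcongr
      _ = _ := by field_simp
  have e6 : F / (2 * (K + G)) ≤ 10 * (b / η ^ 2) + 2 * (a / η) + c * √F + d / (K + G) := by
    have : F / (2 * (K + G)) = (F - d) / (K + G) + d / (K + G) - F / (2 * (K + G)) := by
      field_simp; ring
    linarith
  have e7 : η ^ 2 * F ≤ 2 * (K + G) * (10 * b + 2 * a * η + c * η ^ 2 * √F) + 2 * d * η ^ 2 := by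
    have h1 : 2 * (K + G) * η ^ 2 * (F / (2 * (K + G))) ≤ 2 * (K + G) * η ^ 2 *
      (10 * (b / η ^ 2) + 2 * (a / η) + c * √F + d / (K + G)) := by gcongr
    have h2 : 2 * (K + G) * η ^ 2 * (F / (2 * (K + G))) = η ^ 2 * F := by field_simp
    have h3 : 2 * (K + G) * η ^ 2 * (10 * (b / η ^ 2) + 2 * (a / η) + c * √F + d / (K + G))
      = 2 * (K + G) * (10 * b + 2 * a * η + c * η ^ 2 * √F) + 2 * d * η ^ 2 := by field_simp
    linarith
  have e8 : 2 * (K + G) * (10 * b + 2 * a * η + c * η ^ 2 * √F) + 2 * d * η ^ 2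
      ≤ 2 * K2 * (10 * b + 2 * a * ρ + c * ρ * (η * √F)) + 2 * d * ρ ^ 2 := by
    have : c * η ^ 2 * √F = c * η * (η * √F) := by ring
    rw [this]
    have hK20 : 0 ≤ K2 := by linarith
    gcongr
  have e9 : (η * √F) ^ 2 = η ^ 2 * F := by rw [mul_pow, sF]
  nlinarith [sq_nonneg (η * √F - 2 * (K2 * c * ρ))]

/-- The quantity whose maximum is studied in the Bernstein estimate: `log (η² F (K + G))`, where `F` is
the sum of the squared gradients and `G` the sum of the squares of the family. -/
def chi (K R : ℝ) (z : ℝ × ℝ) (w : ι → ℝ × ℝ → ℝ) (y : ℝ × ℝ) : ℝ :=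
  2 * Real.log (eta R z y) + (Real.log (FF w y) + Real.log (K + GG w y))

/-- The constant of the Bernstein estimate at a maximum point. -/
def bconst (N C R K : ℝ) : ℝ :=
  2 * (2 * (K + N * C ^ 2) * (10 * (4 * (1 + 2 * C ^ 2) * R ^ 2) + 2 * (4 + 4 * C ^ 2) * R ^ 2)
    + 2 * (2 * N * C ^ 2 + N ^ 2 * C ^ 4) * (R ^ 2) ^ 2
    + 2 * ((K + N * C ^ 2) * (72 * N * C ^ 2 + (18 * N * C ^ 2) ^ 2) * R ^ 2) ^ 2)

/-- The bound for `η² |∇w|²` at a maximum point of `chi`. -/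
lemma bern_at_max (hC : 1 ≤ C) (hU : IsOpen U) (hu : Sm U u) (hw : ∀ i, Sm U (w i)) (hx : x ∈ U)
    (h : BHyp C u w x) (hF1 : 1 ≤ FF w x) {N K : ℝ} (hN : (Fintype.card ι : ℝ) ≤ N)
    (hK1 : 1 ≤ K) (hK : 24 * (N * C ^ 2) * (1 + 2 * C ^ 2) ≤ K) (n0 : 0 < eta R z x)
    (hm : IsLocalMax (chi K R z w) x) :
    (eta R z x) ^ 2 * FF w x ≤ bconst N C R K := by
  have hG0 := GG_nonneg (w := w) (x := x)
  have hN0 : (0 : ℝ) ≤ N := (Nat.cast_nonneg _).trans hN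
  have hF0 : 0 < FF w x := by linarith
  have key : ∀ v : ℝ × ℝ, _ := fun v =>
    ((((eta_J R z x v).log n0).smul 2).add ((((Sm.FF hU hw).J hU hx v).log hF0).add
      (((J.const K).add ((Sm.GG hw).J hU hx v)).log (by linarith)))).max (isLocalMax_line hm v)
  have key2 : ∀ v : ℝ × ℝ, _ := fun v => by
    have := bern_dir (key v).1 (key v).2
    rw [zero_add, zero_add] at this
    exact this
  have k1 := key2 dX
  have k2 := key2 dY
  have k3 := key2 (tau u x)
  have hp : (dd dX u x) ^ 2 ≤ C ^ 2 := sq_le_sq' (abs_le.1 h.p).1 (abs_le.1 h.p).2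
  have hq : (dd dY u x) ^ 2 ≤ C ^ 2 := sq_le_sq' (abs_le.1 h.q).1 (abs_le.1 h.q).2
  have hR : (x.1 - z.1) ^ 2 + (x.2 - z.2) ^ 2 ≤ R ^ 2 := by unfold eta at n0; linarith
  have hηR : eta R z x ≤ R ^ 2 := by
    unfold eta; nlinarith [sq_nonneg (x.1 - z.1), sq_nonneg (x.2 - z.2)]
  have hGN := GG_upper h hN
  unfold bconst
  refine bern_real (K := K) (G := GG w x) (Λ := 1 + 2 * C ^ 2)
    (Ln := -4 - 2 * ((dd dX u x) ^ 2 + (dd dY u x) ^ 2))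
    (Bn := 4 * ((x.1 - z.1) ^ 2 + (x.2 - z.2) ^ 2
      + ((x.1 - z.1) * dd dY u x - (x.2 - z.2) * dd dX u x) ^ 2))
    (LF := Lop u (FF w) x) (LG := Lop u (GG w) x)
    (BG := (dd dX (GG w) x) ^ 2 + (dd dY (GG w) x) ^ 2 + (dd (tau u x) (GG w) x) ^ 2)
    n0 hηR hF1 hG0 hK1 (by linarith) (by positivity) (by positivity) (by positivity) (by positivity)
    (le_trans (by gcongr) hK) ?_ (by linarith) ?_ (LF_lower hC hU hu hw hx h hF1 hN)
    (LG_lower hC hU hw hx h hN) (BG_upper hU hw hx h)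
  · rw [Lop_eq hU (Sm.FF hU hw) hx, Lop_eq hU (Sm.GG hw) hx]
    have hs := add_le_add (add_le_add k1 k2) k3
    simp only [dX, dY, tau] at hs ⊢
    have hK0 : K + GG w x ≠ 0 := by linarith
    refine le_of_eq_of_le ?_ (hs.trans_eq ?_)
    · ring
    · generalize K + GG w x = κ
      ring
  · have a1 : ((x.1 - z.1) * dd dY u x - (x.2 - z.2) * dd dX u x) ^ 2
        ≤ ((x.1 - z.1) ^ 2 + (x.2 - z.2) ^ 2) * ((dd dX u x) ^ 2 + (dd dY u x) ^ 2) := by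
      nlinarith [sq_nonneg ((x.1 - z.1) * dd dX u x + (x.2 - z.2) * dd dY u x)]
    have a2 : ((x.1 - z.1) ^ 2 + (x.2 - z.2) ^ 2) * ((dd dX u x) ^ 2 + (dd dY u x) ^ 2)
        ≤ R ^ 2 * (C ^ 2 + C ^ 2) := by gcongr
    nlinarith

/-- Interior gradient estimate for the family `w`. -/
lemma bernstein (N C R : ℝ) (hC : 1 ≤ C) (hR : 0 < R) (hN : 0 ≤ N) : ∃ C' : ℝ,
    ∀ (ι : Type) [Fintype ι] (U : Set (ℝ × ℝ)) (u : ℝ × ℝ → ℝ) (w : ι → ℝ × ℝ → ℝ) (z : ℝ × ℝ),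
      (Fintype.card ι : ℝ) ≤ N → IsOpen U → Sm U u → (∀ i, Sm U (w i)) →
      (∀ y, 0 ≤ eta R z y → y ∈ U ∧ BHyp C u w y) → FF w z ≤ C' := by
  set K := max 1 (24 * (N * C ^ 2) * (1 + 2 * C ^ 2)) with hK
  have K1 : 1 ≤ K := le_max_left _ _
  set m := max (bconst N C R K) (R ^ 4) with hm
  refine ⟨m * (K + N * C ^ 2) / (R ^ 4 * K), ?_⟩
  intro ι _ U u w z hcard hU hu hw hD
  have hm0 : 0 < m := lt_of_lt_of_le (by positivity) (le_max_right _ _)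
  rcases (FF_nonneg (w := w) (x := z)).eq_or_lt with hFz | hFz
  · rw [← hFz]; positivity
  set φ : ℝ × ℝ → ℝ := fun y => eta R z y ^ 2 * FF w y * (K + GG w y) with hφ
  have hKG : ∀ y, 0 < K + GG w y := fun y => by linarith [GG_nonneg (w := w) (x := y)]
  have hcF : ContinuousOn (FF w) U := (Sm.FF hU hw).continuousOn
  have hcG : ContinuousOn (GG w) U := (Sm.GG hw).continuousOn
  have hcont : ContinuousOn φ {y | 0 ≤ eta R z y} := by
    have h1 : ContinuousOn φ U :=
      ((continuous_eta.continuousOn.pow 2).mul hcF).mul (continuousOn_const.add hcG)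
    exact h1.mono fun y hy => (hD y hy).1
  have hz : z ∈ {y | 0 ≤ eta R z y} := by rw [mem_ofPred_eq, eta_self]; positivity
  obtain ⟨x, hx, hmax⟩ := (isCompact_disc hR.le).exists_isMaxOn ⟨z, hz⟩ hcont
  have hzx : φ z ≤ φ x := hmax hz
  have hφz : R ^ 4 * FF w z * K ≤ φ z := by
    simp only [hφ, eta_self]
    have := GG_nonneg (w := w) (x := z)
    calc R ^ 4 * FF w z * K = (R ^ 2) ^ 2 * FF w z * K := by ring
      _ ≤ _ := by gcongr; linarith
  have hφx : 0 < φ x := lt_of_lt_of_le (by positivity) (hφz.trans hzx)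
  have hn0 : 0 < eta R z x := by
    refine lt_of_le_of_ne hx fun h => ?_
    simp [hφ, ← h] at hφx
  have hF0 : 0 < FF w x := by
    refine lt_of_le_of_ne FF_nonneg fun h => ?_
    simp [hφ, ← h] at hφx
  obtain ⟨hxU, hB⟩ := hD x hx
  have hηR : eta R z x ≤ R ^ 2 := by
    unfold eta; nlinarith [sq_nonneg (x.1 - z.1), sq_nonneg (x.2 - z.2)]
  have hlog : ∀ y, 0 < eta R z y → 0 < FF w y → chi K R z w y = Real.log (φ y) := by
    intro y h1 h2
    have := hKG y
    rw [hφ, chi, Real.log_mul (by positivity) (by positivity), Real.log_mul (by positivity)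
      (by positivity), Real.log_pow]
    push_cast; ring
  have hloc : IsLocalMax (chi K R z w) x := by
    have h1 : ∀ᶠ y in 𝓝 x, 0 < eta R z y := continuous_eta.continuousAt.eventually (lt_mem_nhds hn0)
    have h2 : ∀ᶠ y in 𝓝 x, 0 < FF w y :=
      (hcF.continuousAt (hU.mem_nhds hxU)).eventually (lt_mem_nhds hF0)
    filter_upwards [h1, h2] with y h3 h4
    rw [hlog y h3 h4, hlog x hn0 hF0]
    have := hKG y
    exact Real.log_le_log (by simp only [hφ]; positivity) (hmax h3.le)
  have hbd : eta R z x ^ 2 * FF w x ≤ m := by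
    by_cases hF1 : 1 ≤ FF w x
    · exact (bern_at_max hC hU hu hw hxU hB hF1 hcard K1 (le_max_right _ _) hn0 hloc).trans
        (le_max_left _ _)
    · push Not at hF1
      refine le_trans ?_ (le_max_right _ _)
      calc eta R z x ^ 2 * FF w x ≤ (R ^ 2) ^ 2 * 1 := by gcongr
        _ = R ^ 4 := by ring
  rw [le_div_iff₀ (by positivity)]
  have h1 : φ x ≤ m * (K + N * C ^ 2) := by
    simp only [hφ]
    have := hKG x
    have := GG_upper hB hcard
    gcongr
  linarith

end CMC

namespace CMC
open scoped Topology ContDiff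

/-! ### Higher derivatives as weighted polynomials -/

variable {U : Set (ℝ × ℝ)} {f g u : ℝ × ℝ → ℝ} {x z e e' : ℝ × ℝ} {H R C : ℝ}

/-- The coordinate directions, indexed by `Bool`. -/
def dir : Bool → ℝ × ℝ
  | false => dX
  | true => dY

/-- Iterated partial derivative along a word of coordinate directions. -/
def D : List Bool → (ℝ × ℝ → ℝ) → ℝ × ℝ → ℝ
  | [], u => u
  | k :: α, u => dd (dir k) (D α u)

lemma Sm.D (hu : Sm U u) (hU : IsOpen U) : ∀ α : List Bool, Sm U (D α u)
  | [] => hu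
  | k :: α => (Sm.D hu hU α).dd hU (dir k)

/-- Weighted polynomials in `1 / W` and the derivatives of `u`: a derivative of order at most `m`
has weight `0`, and one of order `m + j` has weight `j`. `Wt m j T` means that the differential
expression `T` has weight at most `j`. -/
inductive Wt (m : ℕ) : ℕ → ((ℝ × ℝ → ℝ) → ℝ × ℝ → ℝ) → Prop
  | const (j : ℕ) (c : ℝ) : Wt m j (fun _ _ => c)
  | nu (j : ℕ) : Wt m j (fun u x => (WW u x)⁻¹)
  | der (j : ℕ) (α : List Bool) (h1 : 1 ≤ α.length) (h2 : α.length ≤ m + j) : Wt m j (D α)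
  | add {j : ℕ} {S T : (ℝ × ℝ → ℝ) → ℝ × ℝ → ℝ} : Wt m j S → Wt m j T →
      Wt m j (fun u x => S u x + T u x)
  | mul {i j : ℕ} {S T : (ℝ × ℝ → ℝ) → ℝ × ℝ → ℝ} : Wt m i S → Wt m j T →
      Wt m (i + j) (fun u x => S u x * T u x)

variable {m j : ℕ} {S T : (ℝ × ℝ → ℝ) → ℝ × ℝ → ℝ}

lemma Wt.mono_left {m' : ℕ} (hm : m ≤ m') (h : Wt m j T) : Wt m' j T := by
  induction h with
  | const j c => exact .const j c
  | nu j => exact .nu j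
  | der j α h1 h2 => exact .der j α h1 (by omega)
  | add _ _ h1 h2 => exact h1.add h2
  | mul _ _ h1 h2 => exact h1.mul h2

lemma Wt.mul_eq {i k : ℕ} (hS : Wt m i S) (hT : Wt m j T) (h : i + j = k) :
    Wt m k (fun u x => S u x * T u x) := h ▸ hS.mul hT

lemma Wt.mul0 (hS : Wt m 0 S) (hT : Wt m j T) : Wt m j (fun u x => S u x * T u x) :=
  hS.mul_eq hT (zero_add j)

lemma Wt.sub (hS : Wt m j S) (hT : Wt m j T) : Wt m j (fun u x => S u x - T u x) := by
  have : (fun (u : ℝ × ℝ → ℝ) x => S u x - T u x) = fun u x => S u x + (-1) * T u x := by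
    ext u x; ring
  rw [this]
  exact hS.add ((Wt.const 0 (-1)).mul0 hT)

lemma Wt.sm (h : Wt m j T) (hU : IsOpen U) (hu : Sm U u) : Sm U (T u) := by
  induction h with
  | const j c => exact .const c
  | nu j => exact (hu.WW hU).inv fun x _ => WW_pos.ne'
  | der j α h1 h2 => exact hu.D hU α
  | add _ _ h1 h2 => exact h1.add h2
  | mul _ _ h1 h2 => exact h1.mul h2

lemma dd_inv_WW (hU : IsOpen U) (hu : Sm U u) (hx : x ∈ U) (e : ℝ × ℝ) :
    dd e (fun y => (WW u y)⁻¹) x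
      = -((WW u x)⁻¹ * ((WW u x)⁻¹ * (WW u x)⁻¹) *
        (dd dX u x * dd e (dd dX u) x + dd dY u x * dd e (dd dY u) x)) := by
  have hW := WW_pos (u := u) (x := x)
  have hs : Sm U (fun y => (WW u y)⁻¹) := (hu.WW hU).inv fun x _ => WW_pos.ne'
  have h1 := dd_inv_VV hU hu hx e
  have h2 : dd e (fun y => (VV u y)⁻¹) x = dd e (fun y => (WW u y)⁻¹ * (WW u y)⁻¹) x :=
    dd_congr hU (fun y _ => by rw [← WW_sq, pow_two, mul_inv]) hx
  rw [h2, dd_mul (hs.diff hU hx) (hs.diff hU hx), ← WW_sq] at h1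
  have h3 : dd e (fun y => (WW u y)⁻¹) x = WW u x / 2 * (dd e (fun y => (WW u y)⁻¹) x * (WW u x)⁻¹
    + (WW u x)⁻¹ * dd e (fun y => (WW u y)⁻¹) x) := by field_simp; ring
  rw [h3, h1]
  field_simp

/-- Differentiation raises either the order `m` or the weight `j` by one. -/
lemma Wt.deriv {a b : ℕ} (hab : 1 ≤ a + b) (hm : 1 ≤ m) (k : Bool) (h : Wt m j T) :
    ∃ T', Wt (m + a) (j + b) T' ∧ ∀ (U : Set (ℝ × ℝ)) (u : ℝ × ℝ → ℝ), IsOpen U → Sm U u →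
      ∀ x ∈ U, dd (dir k) (T u) x = T' u x := by
  induction h with
  | const j c => exact ⟨_, .const _ 0, fun U u _ _ x _ => dd_const c⟩
  | nu j =>
    have n : Wt (m + a) 0 (fun u x => (WW u x)⁻¹) := .nu 0
    have p : Wt (m + a) 0 (D [false]) := .der 0 _ (by simp) (by simp; omega)
    have q : Wt (m + a) 0 (D [true]) := .der 0 _ (by simp) (by simp; omega)
    have pk : Wt (m + a) (j + b) (D [k, false]) := .der _ _ (by simp) (by simp; omega)
    have qk : Wt (m + a) (j + b) (D [k, true]) := .der _ _ (by simp) (by simp; omega)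
    refine ⟨_, (Wt.const 0 (-1)).mul0 ((n.mul0 (n.mul0 n)).mul0 ((p.mul0 pk).add (q.mul0 qk))), ?_⟩
    intro U u hU hu x hx
    rw [dd_inv_WW hU hu hx]
    simp only [D, dir]
    ring
  | der j α h1 h2 =>
    exact ⟨D (k :: α), .der _ _ (by simp) (by simp; omega), fun _ _ _ _ _ _ => rfl⟩
  | add hS hT h1 h2 =>
    obtain ⟨S', hS', eS⟩ := h1
    obtain ⟨T', hT', eT⟩ := h2
    refine ⟨_, hS'.add hT', fun U u hU hu x hx => ?_⟩
    rw [dd_add ((hS.sm hU hu).diff hU hx) ((hT.sm hU hu).diff hU hx), eS U u hU hu x hx,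
      eT U u hU hu x hx]
  | mul hS hT h1 h2 =>
    obtain ⟨S', hS', eS⟩ := h1
    obtain ⟨T', hT', eT⟩ := h2
    refine ⟨_, (hS'.mul_eq (hT.mono_left (Nat.le_add_right _ _)) (by omega)).add
      ((hS.mono_left (Nat.le_add_right _ _)).mul_eq hT' (by omega)), fun U u hU hu x hx => ?_⟩
    rw [dd_mul ((hS.sm hU hu).diff hU hx) ((hT.sm hU hu).diff hU hx), eS U u hU hu x hx,
      eT U u hU hu x hx]

/-- An expression of weight `j` grows at most like `s ^ j` when the derivatives of order `m + i`
grow like `s ^ i`. -/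
lemma Wt.bound (h : Wt m j T) {M : ℝ} : ∃ C, 0 ≤ C ∧ ∀ (u : ℝ × ℝ → ℝ) (x : ℝ × ℝ) (s : ℝ),
    1 ≤ s → (∀ α : List Bool, 1 ≤ α.length → α.length ≤ m + j →
      |D α u x| ≤ M * s ^ (α.length - m)) → |T u x| ≤ C * s ^ j := by
  induction h with
  | const j c =>
    refine ⟨|c|, abs_nonneg c, fun u x s hs _ => ?_⟩
    exact le_mul_of_one_le_right (abs_nonneg c) (one_le_pow₀ hs)
  | nu j =>
    refine ⟨1, zero_le_one, fun u x s hs _ => ?_⟩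
    rw [abs_of_pos (inv_pos.2 WW_pos), one_mul]
    exact (inv_le_one_of_one_le₀ WW_one_le).trans (one_le_pow₀ hs)
  | der j α h1 h2 =>
    refine ⟨|M|, abs_nonneg M, fun u x s hs h => ?_⟩
    refine (h α h1 h2).trans ?_
    have : 0 ≤ s := by linarith
    gcongr
    · exact le_abs_self M
    · omega
  | add _ _ h1 h2 =>
    obtain ⟨A, hA, h1⟩ := h1
    obtain ⟨B, hB, h2⟩ := h2
    refine ⟨A + B, by positivity, fun u x s hs h => ?_⟩
    rw [add_mul]
    exact (abs_add_le _ _).trans (add_le_add (h1 u x s hs h) (h2 u x s hs h))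
  | mul _ _ h1 h2 =>
    obtain ⟨A, hA, h1⟩ := h1
    obtain ⟨B, hB, h2⟩ := h2
    refine ⟨A * B, by positivity, fun u x s hs h => ?_⟩
    have hs0 : 0 ≤ s := by linarith
    rw [abs_mul, pow_add, mul_mul_mul_comm]
    exact mul_le_mul (h1 u x s hs fun α a b => h α a (by omega))
      (h2 u x s hs fun α a b => h α a (by omega)) (abs_nonneg _) (by positivity)

/-- Differentiating the equation satisfied by `D α u` once more. -/
lemma Lop_step {α : List Bool} {m a b : ℕ} (hm : m = α.length + 1) (hab : 1 ≤ a + b)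
    (h2 : 2 ≤ m + a) (hT : Wt m 0 T) (hLT : ∀ (U : Set (ℝ × ℝ)) (u : ℝ × ℝ → ℝ), IsOpen U → IsSol H U u →
      ∀ x ∈ U, Lop u (D α u) x = T u x) (k : Bool) :
    ∃ T', Wt (m + a) b T' ∧ ∀ (U : Set (ℝ × ℝ)) (u : ℝ × ℝ → ℝ), IsOpen U → IsSol H U u →
      ∀ x ∈ U, Lop u (D (k :: α) u) x = T' u x := by
  obtain ⟨T', hT', e⟩ := hT.deriv hab (by omega) k
  rw [zero_add] at hT'
  have p : Wt (m + a) 0 (D [false]) := .der 0 _ (by simp) (by simp; omega)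
  have q : Wt (m + a) 0 (D [true]) := .der 0 _ (by simp) (by simp; omega)
  have pk : Wt (m + a) 0 (D [k, false]) := .der _ _ (by simp) (by simp; omega)
  have qk : Wt (m + a) 0 (D [k, true]) := .der _ _ (by simp) (by simp; omega)
  have r : Wt (m + a) b (D (false :: false :: α)) := .der _ _ (by simp) (by simp; omega)
  have s : Wt (m + a) b (D (true :: false :: α)) := .der _ _ (by simp) (by simp; omega)
  have t : Wt (m + a) b (D (true :: true :: α)) := .der _ _ (by simp) (by simp; omega)
  have c2 : Wt (m + a) 0 (fun _ _ => (2 : ℝ)) := .const 0 2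
  refine ⟨_, hT'.sub (((((c2.mul0 q).mul0 qk).mul0 r).sub
    ((c2.mul0 ((pk.mul0 q).add (p.mul0 qk))).mul0 s)).add (((c2.mul0 p).mul0 pk).mul0 t)), ?_⟩
  intro U u hU hu x hx
  simp only [D]
  rw [Lop_dd hU hu.1 (hu.1.D hU α) hx, ← e U u hU hu.1 x hx, dd_congr hU (hLT U u hU hu) hx]
  simp only [dir]

/-- Each derivative of a solution satisfies a linear equation whose right-hand side involves
derivatives of at most one order more. -/
lemma Lop_D (H : ℝ) : ∀ α : List Bool, ∃ T, Wt (α.length + 1) 0 T ∧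
    ∀ (U : Set (ℝ × ℝ)) (u : ℝ × ℝ → ℝ), IsOpen U → IsSol H U u →
      ∀ x ∈ U, Lop u (D α u) x = T u x
  | [] => by
    have p : Wt 1 0 (D [false]) := .der 0 _ (by simp) (by simp)
    have q : Wt 1 0 (D [true]) := .der 0 _ (by simp) (by simp)
    have n : Wt 1 0 (fun u x => (WW u x)⁻¹) := .nu 0
    have V : Wt 1 0 (fun u x => 1 + D [false] u x * D [false] u x + D [true] u x * D [true] u x) :=
      ((Wt.const 0 1).add (p.mul0 p)).add (q.mul0 q)
    refine ⟨_, (Wt.const 0 (2 * H)).mul0 ((V.mul0 V).mul0 n), fun U u hU hu x hx => ?_⟩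
    have hV : 1 + D [false] u x * D [false] u x + D [true] u x * D [true] u x = WW u x ^ 2 := by
      rw [WW_sq, VV]; simp only [D, dir]; ring
    have hW := WW_pos (u := u) (x := x)
    show Lop u u x = _
    rw [hu.2 x hx, hV]
    field_simp
  | k :: α => by
    obtain ⟨T, hT, h⟩ := Lop_D H α
    exact Lop_step (a := 1) (b := 0) rfl (by norm_num) (by omega) hT h k

end CMC

namespace CMC
open scoped Topology ContDiff

/-! ### Bounds for derivatives of all orders -/

variable {U : Set (ℝ × ℝ)} {f g u : ℝ × ℝ → ℝ} {x z e e' : ℝ × ℝ} {H R C : ℝ}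

/-- Growth of `L (D^α u)` and of its first derivatives, for `|α| = m`, when the derivatives of `u` of
order at most `m` are bounded by `M` and those of order `m + 1` and `m + 2` by `M s` and `M s²`. -/
lemma Lop_D_bound (H M : ℝ) {m : ℕ} (hm : 2 ≤ m) (α : List Bool) (hα : α.length = m) :
    ∃ C, 0 ≤ C ∧ ∀ (U : Set (ℝ × ℝ)) (u : ℝ × ℝ → ℝ), IsOpen U → IsSol H U u → ∀ x ∈ U,
      ∀ s : ℝ, 1 ≤ s →
      ((∀ β : List Bool, 1 ≤ β.length → β.length ≤ m + 1 → |D β u x| ≤ M * s ^ (β.length - m)) →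
        |Lop u (D α u) x| ≤ C * s) ∧
      ((∀ β : List Bool, 1 ≤ β.length → β.length ≤ m + 2 → |D β u x| ≤ M * s ^ (β.length - m)) →
        ∀ k, |dd (dir k) (Lop u (D α u)) x| ≤ C * s ^ 2) := by
  obtain ⟨T, hT, e⟩ : ∃ T, Wt m 1 T ∧ ∀ (U : Set (ℝ × ℝ)) (u : ℝ × ℝ → ℝ), IsOpen U → IsSol H U u →
      ∀ x ∈ U, Lop u (D α u) x = T u x := by
    match α, hα with
    | [], hα => simp at hα; omega
    | k :: α, hα =>
      obtain ⟨T, hT, h⟩ := Lop_D H α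
      have := Lop_step (a := 0) (b := 1) rfl (by norm_num) (by simp at hα; omega) hT h k
      simp only [List.length_cons] at hα
      rwa [add_zero, hα] at this
  have hd : ∀ k, ∃ C, 0 ≤ C ∧ ∀ (U : Set (ℝ × ℝ)) (u : ℝ × ℝ → ℝ), IsOpen U → IsSol H U u →
      ∀ x ∈ U, ∀ s : ℝ, 1 ≤ s →
      (∀ β : List Bool, 1 ≤ β.length → β.length ≤ m + 2 → |D β u x| ≤ M * s ^ (β.length - m)) →
        |dd (dir k) (Lop u (D α u)) x| ≤ C * s ^ 2 := by
    intro k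
    obtain ⟨T', hT', e'⟩ := hT.deriv (a := 0) (b := 1) (by norm_num) (by omega) k
    obtain ⟨C, hC, hb⟩ := hT'.bound (M := M)
    refine ⟨C, hC, fun U u hU hu x hx s hs h => ?_⟩
    rw [dd_congr hU (e U u hU hu) hx, e' U u hU hu.1 x hx]
    exact hb u x s hs h
  obtain ⟨C, hC, hb⟩ := hT.bound (M := M)
  choose C' hC' hb' using hd
  have c1 := hC' false
  have c2 := hC' true
  refine ⟨C + C' false + C' true, by positivity, fun U u hU hu x hx s hs => ⟨fun h => ?_, fun h k => ?_⟩⟩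
  · rw [e U u hU hu x hx]
    refine (hb u x s hs h).trans ?_
    rw [pow_one]
    gcongr
    linarith
  · refine (hb' k U u hU hu x hx s hs h).trans ?_
    gcongr
    cases k <;> linarith

lemma abs_dd_le (k : Bool) (h : (dd dX f x) ^ 2 + (dd dY f x) ^ 2 ≤ C) : |dd (dir k) f x| ≤ √C := by
  cases k <;> refine abs_le_sqrt' ?_ <;> simp only [dir] <;>
    nlinarith [sq_nonneg (dd dX f x), sq_nonneg (dd dY f x)]

lemma abs_dd2_le (hU : IsOpen U) (hf : Sm U f) (hx : x ∈ U) (k l : Bool) (h : hess2 f x ≤ C) :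
    |dd (dir k) (dd (dir l) f) x| ≤ √C := by
  unfold hess2 at h
  have h1 := sq_nonneg (dd dX (dd dX f) x)
  have h2 := sq_nonneg (dd dY (dd dX f) x)
  have h3 := sq_nonneg (dd dY (dd dY f) x)
  have hc := dd_comm (e := dX) (e' := dY) hU hf hx
  cases k <;> cases l <;> refine abs_le_sqrt' ?_ <;> simp only [dir, hc] <;> nlinarith

/-- Bounds up to order `m ≥ 2` on a disc give a bound of order `m + 1` at its centre. -/
lemma order_step (H : ℝ) {m : ℕ} (hm : 2 ≤ m) (M : ℝ) (hM : 1 ≤ M) {ρ : ℝ} (hρ : 0 < ρ) :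
    ∃ C, ∀ (U : Set (ℝ × ℝ)) (u : ℝ × ℝ → ℝ) (z : ℝ × ℝ), IsOpen U → IsSol H U u →
      (∀ y ∈ Metric.closedBall z ρ, y ∈ U ∧ ∀ β : List Bool, 1 ≤ β.length → β.length ≤ m →
        |D β u y| ≤ M) → ∀ β : List Bool, β.length = m + 1 → |D β u z| ≤ C := by
  choose B hB0 hB using fun v : List.Vector Bool m => Lop_D_bound H M hm v.1 v.2
  set A := M + ∑ v, B v with hA
  have hBA : ∀ v, B v ≤ A := fun v => by
    have := Finset.single_le_sum (f := B) (fun i _ => hB0 i) (Finset.mem_univ v)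
    linarith
  have hMA : M ≤ A := by
    have := Finset.sum_nonneg (s := Finset.univ) (f := B) (fun i _ => hB0 i)
    linarith
  obtain ⟨C', hC'⟩ := bernstein (Fintype.card (List.Vector Bool m)) A ρ (hM.trans hMA) hρ
    (Nat.cast_nonneg _)
  refine ⟨√C', fun U u z hU hu hbd β hβ => ?_⟩
  set w : List.Vector Bool m → ℝ × ℝ → ℝ := fun v => D v.1 u with hw
  have hsw : ∀ v, Sm U (w v) := fun v => hu.1.D hU v.1
  have key : FF w z ≤ C' := by
    refine hC' _ U u w z le_rfl hU hu.1 hsw fun y hy => ?_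
    obtain ⟨hyU, hb⟩ := hbd y (eta_abs hρ.le hy)
    have b1 : ∀ β : List Bool, β.length = m + 1 → |D β u y| ≤ √(FF w y) := by
      intro β hβ
      match β, hβ with
      | k :: α, hα =>
        simp only [List.length_cons, Nat.add_right_cancel_iff] at hα
        exact abs_dd_le k (grad_le_FF (w := w) (⟨α, hα⟩ : List.Vector Bool m))
    have b2 : ∀ β : List Bool, β.length = m + 2 → |D β u y| ≤ √(QQ w y) := by
      intro β hβ
      match β, hβ with
      | k :: l :: α, hα =>
        simp only [List.length_cons, Nat.add_right_cancel_iff] at hα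
        exact abs_dd2_le hU (hu.1.D hU α) hyU k l
          (hess_le_QQ (w := w) (⟨α, by omega⟩ : List.Vector Bool m))
    have hF := FF_nonneg (w := w) (x := y)
    have hsF := Real.sqrt_nonneg (FF w y)
    have hsQ := Real.sqrt_nonneg (QQ w y)
    have g1 : ∀ v, |Lop u (w v) y| ≤ A * (1 + √(FF w y)) := by
      intro v
      refine ((hB v U u hU hu y hyU (1 + √(FF w y)) (by linarith)).1 fun β h1 h2 => ?_).trans
        (by gcongr; exact hBA v)
      rcases Nat.lt_or_ge m β.length with h3 | h3
      · have : β.length = m + 1 := by omega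
        rw [this, Nat.add_sub_cancel_left, pow_one]
        refine (b1 β this).trans ?_
        nlinarith
      · rw [Nat.sub_eq_zero_of_le h3, pow_zero, mul_one]
        exact hb β h1 h3
    have g2 : ∀ v k, |dd (dir k) (Lop u (w v)) y| ≤ A * (1 + FF w y + √(QQ w y)) := by
      intro v k
      set s := √(1 + FF w y + √(QQ w y)) with hs
      have hs2 : s ^ 2 = 1 + FF w y + √(QQ w y) := Real.sq_sqrt (by positivity)
      have hs1 : 1 ≤ s := Real.one_le_sqrt.2 (by linarith)
      rw [← hs2]
      refine ((hB v U u hU hu y hyU s hs1).2 (fun β h1 h2 => ?_) k).trans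
        (by gcongr; exact hBA v)
      rcases Nat.lt_or_ge m β.length with h3 | h3
      · rcases Nat.lt_or_ge (m + 1) β.length with h4 | h4
        · have : β.length = m + 2 := by omega
          rw [this, Nat.add_sub_cancel_left, hs2]
          refine (b2 β this).trans ?_
          nlinarith
        · have : β.length = m + 1 := by omega
          rw [this, Nat.add_sub_cancel_left, pow_one]
          refine (b1 β this).trans ?_
          have : √(FF w y) ≤ s := Real.sqrt_le_sqrt (by linarith)
          nlinarith
      · rw [Nat.sub_eq_zero_of_le h3, pow_zero, mul_one]
        exact hb β h1 h3
    have hbA : ∀ β : List Bool, 1 ≤ β.length → β.length ≤ m → |D β u y| ≤ A :=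
      fun β h1 h2 => (hb β h1 h2).trans hMA
    exact ⟨hyU, hbA [false] (by simp) (by simp; omega), hbA [true] (by simp) (by simp; omega),
      hbA [false, false] (by simp) (by simpa), hbA [true, false] (by simp) (by simpa),
      hbA [true, true] (by simp) (by simpa), fun v => hbA v.1 (by have := v.2; omega) v.2.le,
      g1, fun v => g2 v false, fun v => g2 v true⟩
  match β, hβ with
  | k :: α, hα =>
    simp only [List.length_cons, Nat.add_right_cancel_iff] at hα
    exact abs_dd_le k ((grad_le_FF (w := w) (⟨α, hα⟩ : List.Vector Bool m)).trans key)

/-- A bound for the gradient at one point gives bounds for all derivatives nearby. -/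
lemma all_orders (hH : 0 < H) {ρ : ℝ} (hρ : 0 < ρ) (M : ℝ) (m : ℕ) :
    ∃ r > 0, r ≤ ρ ∧ ∃ C, 1 ≤ C ∧ ∀ (U : Set (ℝ × ℝ)) (u : ℝ × ℝ → ℝ) (z : ℝ × ℝ), IsOpen U →
      IsSol H U u → Metric.closedBall z ρ ⊆ U → VV u z ≤ M →
        ∀ y ∈ Metric.ball z r, ∀ β : List Bool, 1 ≤ β.length → β.length ≤ m + 2 →
          |D β u y| ≤ C := by
  induction m with
  | zero =>
    obtain ⟨r, hr, hrρ, C, h⟩ := grad_hess_bound hH hρ M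
    refine ⟨r, hr, hrρ, max 1 (√C), le_max_left _ _, fun U u z hU hu hsub hV y hy β h1 h2 => ?_⟩
    obtain ⟨h3, h4⟩ := h U u z hU hu hsub hV y hy
    have hyU : y ∈ U := hsub (Metric.ball_subset_closedBall (Metric.ball_subset_ball hrρ hy))
    refine le_trans ?_ (le_max_right _ _)
    match β, h1, h2 with
    | [k], _, _ => exact abs_dd_le k (by simp only [D]; unfold VV at h3; linarith)
    | [k, l], _, _ => exact abs_dd2_le hU hu.1 hyU k l h4
    | _ :: _ :: _ :: _, _, h2 => simp at h2
  | succ m ih =>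
    obtain ⟨r, hr, hrρ, C, hC, h⟩ := ih
    obtain ⟨C', h'⟩ := order_step H (m := m + 2) (by omega) C hC (ρ := r / 3) (by positivity)
    refine ⟨r / 2, by positivity, by linarith, max C C', hC.trans (le_max_left _ _),
      fun U u z hU hu hsub hV y hy β h1 h2 => ?_⟩
    have hin : ∀ w ∈ Metric.closedBall y (r / 3), w ∈ Metric.ball z r := by
      intro w hw
      rw [Metric.mem_closedBall] at hw
      rw [Metric.mem_ball] at hy ⊢
      linarith [dist_triangle w y z]
    rcases Nat.lt_or_ge (m + 2) β.length with h3 | h3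
    · refine (h' U u y hU hu (fun w hw => ⟨?_, h U u z hU hu hsub hV w (hin w hw)⟩) β
        (by omega)).trans (le_max_right _ _)
      exact hsub (Metric.ball_subset_closedBall (Metric.ball_subset_ball hrρ (hin w hw)))
    · exact (h U u z hU hu hsub hV y (Metric.ball_subset_ball (by linarith) hy) β h1 h3).trans
        (le_max_left _ _)

end CMC

namespace CMC
open scoped Topology ContDiff

/-! ### Compactness -/

variable {U : Set (ℝ × ℝ)} {f g u : ℝ × ℝ → ℝ} {x z e e' : ℝ × ℝ} {H R C : ℝ}

/-- Local uniform boundedness of a sequence of functions. -/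
def LB (U : Set (ℝ × ℝ)) (f : ℕ → ℝ × ℝ → ℝ) : Prop :=
  ∀ x ∈ U, ∃ r > 0, ∃ B, ∀ n, ∀ y ∈ Metric.ball x r, |f n y| ≤ B

/-- A sequence with locally bounded gradients is locally equi-Lipschitz. -/
lemma LB.lipschitz {f : ℕ → ℝ × ℝ → ℝ} (hU : IsOpen U) (hf : ∀ n, Sm U (f n))
    (h1 : LB U fun n => dd dX (f n)) (h2 : LB U fun n => dd dY (f n)) (hx : x ∈ U) :
    ∃ r > 0, Metric.ball x r ⊆ U ∧ ∃ L > 0, ∀ n, ∀ y ∈ Metric.ball x r, ∀ y' ∈ Metric.ball x r,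
      |f n y - f n y'| ≤ L * dist y y' := by
  obtain ⟨r0, hr0, hsub⟩ := Metric.isOpen_iff.1 hU x hx
  obtain ⟨r1, hr1, B1, hB1⟩ := h1 x hx
  obtain ⟨r2, hr2, B2, hB2⟩ := h2 x hx
  set r := min r0 (min r1 r2)
  have e0 : r ≤ r0 := min_le_left _ _
  have e1 : r ≤ r1 := (min_le_right _ _).trans (min_le_left _ _)
  have e2 : r ≤ r2 := (min_le_right _ _).trans (min_le_right _ _)
  have hs : Metric.ball x r ⊆ U := (Metric.ball_subset_ball e0).trans hsub
  refine ⟨r, lt_min hr0 (lt_min hr1 hr2), hs, 2 * max 1 (max B1 B2), by positivity, ?_⟩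
  intro n y hy y' hy'
  have := Convex.norm_image_sub_le_of_norm_fderiv_le (𝕜 := ℝ) (f := f n)
    (C := 2 * max 1 (max B1 B2)) (fun w hw => (hf n).diff hU (hs hw))
    (fun w hw => fderiv_le
      ((hB1 n w (Metric.ball_subset_ball e1 hw)).trans ((le_max_left _ _).trans (le_max_right _ _)))
      ((hB2 n w (Metric.ball_subset_ball e2 hw)).trans ((le_max_right _ _).trans (le_max_right _ _))))
    (convex_ball x r) hy' hy
  rwa [Real.norm_eq_abs, ← dist_eq_norm] at this

/-- Diagonal extraction on a countable dense set of points and all derivatives at once. -/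
lemma extraction {g : ℕ → ℝ × ℝ → ℝ} (hb : ∀ α, LB U fun n => D α (g n)) :
    ∃ φ : ℕ → ℕ, StrictMono φ ∧ ∀ α i, TopologicalSpace.denseSeq (ℝ × ℝ) i ∈ U →
      ∃ l, Tendsto (fun n => D α (g (φ n)) (TopologicalSpace.denseSeq (ℝ × ℝ) i)) atTop (𝓝 l) := by
  classical
  set q := TopologicalSpace.denseSeq (ℝ × ℝ)
  set X : ℕ → List Bool × ℕ → ℝ := fun n a => if q a.2 ∈ U then D a.1 (g n) (q a.2) else 0 with hX
  have hB : ∀ a, ∃ B, ∀ n, X n a ∈ Icc (-B) B := by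
    intro a
    by_cases h : q a.2 ∈ U
    · obtain ⟨r, hr, B, hB⟩ := hb a.1 _ h
      refine ⟨B, fun n => ?_⟩
      simp only [hX, h, if_true]
      exact abs_le.1 (hB n _ (Metric.mem_ball_self hr))
    · exact ⟨0, fun n => by simp [hX, h]⟩
  choose B hB using hB
  obtain ⟨l, -, φ, hφ, hl⟩ := (isCompact_univ_pi fun a => isCompact_Icc (a := -B a) (b := B a)).tendsto_subseq
    (x := X) (fun n a _ => hB a n)
  refine ⟨φ, hφ, fun α i hi => ⟨l (α, i), ?_⟩⟩
  have := tendsto_pi_nhds.1 hl (α, i)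
  simpa [hX, hi] using this

/-- An equi-Lipschitz sequence converging on a dense set converges locally uniformly. -/
lemma dense_conv {f : ℕ → ℝ × ℝ → ℝ}
    (hL : ∀ x ∈ U, ∃ r > 0, Metric.ball x r ⊆ U ∧ ∃ L > 0, ∀ n, ∀ y ∈ Metric.ball x r,
      ∀ y' ∈ Metric.ball x r, |f n y - f n y'| ≤ L * dist y y')
    (hd : ∀ i, TopologicalSpace.denseSeq (ℝ × ℝ) i ∈ U →
      ∃ l, Tendsto (fun n => f n (TopologicalSpace.denseSeq (ℝ × ℝ) i)) atTop (𝓝 l)) :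
    ∃ v, TendstoLocallyUniformlyOn f v atTop U := by
  have hpt : ∀ x ∈ U, ∃ l, Tendsto (fun n => f n x) atTop (𝓝 l) := by
    intro x hx
    obtain ⟨r, hr, hsub, L, hL0, h⟩ := hL x hx
    refine cauchySeq_tendsto_of_complete (Metric.cauchySeq_iff.2 fun ε hε => ?_)
    obtain ⟨i, hi⟩ := (TopologicalSpace.denseRange_denseSeq (ℝ × ℝ)).exists_dist_lt x
      (ε := min r (ε / (4 * L))) (by positivity)
    set q := TopologicalSpace.denseSeq (ℝ × ℝ) i
    have hq : q ∈ Metric.ball x r := by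
      rw [Metric.mem_ball, dist_comm]; exact hi.trans_le (min_le_left _ _)
    have hLq : L * dist x q ≤ ε / 4 := by
      calc L * dist x q ≤ L * (ε / (4 * L)) := by gcongr; exact hi.le.trans (min_le_right _ _)
        _ = ε / 4 := by field_simp
    obtain ⟨l, hl⟩ := hd i (hsub hq)
    obtain ⟨N, hN⟩ := Metric.cauchySeq_iff.1 hl.cauchySeq (ε / 4) (by positivity)
    refine ⟨N, fun a ha b hb => ?_⟩
    have h1 := h a x (Metric.mem_ball_self hr) q hq
    have h2 := h b x (Metric.mem_ball_self hr) q hq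
    have h3 := hN a ha b hb
    rw [Real.dist_eq] at h3 ⊢
    rw [abs_le] at h1 h2
    rw [abs_lt] at h3 ⊢
    constructor <;> linarith
  choose! v hv using hpt
  refine ⟨v, Metric.tendstoLocallyUniformlyOn_iff.2 fun ε hε x hx => ?_⟩
  obtain ⟨r, hr, hsub, L, hL0, h⟩ := hL x hx
  have hvL : ∀ y ∈ Metric.ball x r, |v y - v x| ≤ L * dist y x := fun y hy =>
    le_of_tendsto ((hv y (hsub hy)).sub (hv x hx)).abs
      (Eventually.of_forall fun n => h n y hy x (Metric.mem_ball_self hr))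
  refine ⟨Metric.ball x (min r (ε / (4 * L))), mem_nhdsWithin_of_mem_nhds
    (Metric.ball_mem_nhds _ (by positivity)), ?_⟩
  filter_upwards [Metric.tendsto_nhds.1 (hv x hx) (ε / 4) (by positivity)] with n hn y hy
  rw [Metric.mem_ball, lt_min_iff] at hy
  have hLy : L * dist y x ≤ ε / 4 := by
    calc L * dist y x ≤ L * (ε / (4 * L)) := by gcongr; exact hy.2.le
      _ = ε / 4 := by field_simp
  have h1 := h n y hy.1 x (Metric.mem_ball_self hr)
  have h2 := hvL y hy.1
  rw [Real.dist_eq] at hn ⊢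
  rw [abs_le] at h1 h2
  rw [abs_lt] at hn ⊢
  constructor <;> linarith

/-- The differential with partial derivatives `a` and `b`. -/
def lin (a b : ℝ) : ℝ × ℝ →L[ℝ] ℝ :=
  a • ContinuousLinearMap.fst ℝ ℝ ℝ + b • ContinuousLinearMap.snd ℝ ℝ ℝ

lemma fderiv_eq_lin : fderiv ℝ f x = lin (dd dX f x) (dd dY f x) := by
  ext <;> simp [lin, dd]

lemma lin_dir (a b : ℝ) (k : Bool) : lin a b (dir k) = cond k b a := by
  cases k <;> simp [lin, dir]

lemma tendsto_smul_const {F : Type*} [NormedAddCommGroup F] [NormedSpace ℝ F]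
    {f : ℕ → ℝ × ℝ → ℝ} {v : ℝ × ℝ → ℝ} (c : F)
    (h : TendstoLocallyUniformlyOn f v atTop U) :
    TendstoLocallyUniformlyOn (fun n x => f n x • c) (fun x => v x • c) atTop U :=
  (ContinuousLinearMap.toSpanSingleton ℝ c).uniformContinuous.comp_tendstoLocallyUniformlyOn h

/-- Smooth functions whose derivatives of each order are locally bounded subconverge, locally
uniformly with all derivatives. -/
lemma compactness {g : ℕ → ℝ × ℝ → ℝ} (hU : IsOpen U) (hg : ∀ n, Sm U (g n))
    (hb : ∀ α, LB U fun n => D α (g n)) :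
    ∃ φ : ℕ → ℕ, StrictMono φ ∧ ∃ v, Sm U v ∧
      ∀ α, TendstoLocallyUniformlyOn (fun n => D α (g (φ n))) (D α v) atTop U := by
  obtain ⟨φ, hφ, hd⟩ := extraction hb
  have hlim : ∀ α, ∃ v, TendstoLocallyUniformlyOn (fun n => D α (g (φ n))) v atTop U := by
    intro α
    refine dense_conv (fun x hx => ?_) (hd α)
    obtain ⟨r, hr, hs, L, hL, h⟩ :=
      LB.lipschitz hU (fun n => (hg n).D hU α) (hb (false :: α)) (hb (true :: α)) hx
    exact ⟨r, hr, hs, L, hL, fun n => h (φ n)⟩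
  choose v hv using hlim
  have hder : ∀ α, ∀ x ∈ U, HasFDerivAt (v α) (lin (v (false :: α) x) (v (true :: α) x)) x := by
    intro α x hx
    refine hasFDerivAt_of_tendstoLocallyUniformlyOn (l := atTop) hU
      (f := fun n => D α (g (φ n)))
      (f' := fun n x => lin (D (false :: α) (g (φ n)) x) (D (true :: α) (g (φ n)) x))
      (g' := fun x => lin (v (false :: α) x) (v (true :: α) x)) ?_ (fun n y hy => ?_)
      (fun y hy => (hv α).tendsto_at hy) hx
    · exact (tendsto_smul_const _ (hv (false :: α))).add (tendsto_smul_const _ (hv (true :: α)))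
    · have := (((hg (φ n)).D hU α).diff hU hy).hasFDerivAt
      rwa [fderiv_eq_lin] at this
  have hsm : ∀ n : ℕ, ∀ α, ContDiffOn ℝ n (v α) U := by
    intro n
    induction n with
    | zero =>
      intro α
      exact contDiffOn_zero.2 fun x hx => (hder α x hx).continuousAt.continuousWithinAt
    | succ n ih =>
      intro α
      push_cast
      refine (contDiffOn_succ_iff_fderiv_of_isOpen hU).2
        ⟨fun x hx => (hder α x hx).differentiableAt.differentiableWithinAt, by simp, ?_⟩
      refine ContDiffOn.congr (f := fun x => lin (v (false :: α) x) (v (true :: α) x)) ?_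
        fun x hx => (hder α x hx).fderiv
      exact ((ih _).smul contDiffOn_const).add ((ih _).smul contDiffOn_const)
  have hD : ∀ α, ∀ x ∈ U, D α (v []) x = v α x := by
    intro α
    induction α with
    | nil => intro x _; rfl
    | cons k α ih =>
      intro x hx
      show dd (dir k) (D α (v [])) x = _
      rw [dd_congr hU ih hx, dd, (hder α x hx).fderiv, lin_dir]
      cases k <;> rfl
  exact ⟨φ, hφ, v [], contDiffOn_infty.2 fun n => hsm n [],
    fun α => (hv α).congr_right fun x hx => (hD α x hx).symm⟩

/-- The `k`-th Fréchet derivative is a fixed linear combination of the partial derivatives. -/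
lemma iterated_eq (k : ℕ) : ∃ (ι : Type) (_ : Fintype ι) (a : ι → List Bool)
    (Φ : ι → (ℝ × ℝ) [×k]→L[ℝ] ℝ), ∀ (U : Set (ℝ × ℝ)) (f : ℝ × ℝ → ℝ), IsOpen U → Sm U f →
      ∀ x ∈ U, iteratedFDeriv ℝ k f x = ∑ i, D (a i) f x • Φ i := by
  induction k with
  | zero =>
    refine ⟨Unit, inferInstance, fun _ => [], fun _ =>
      ContinuousMultilinearMap.uncurry0 ℝ (ℝ × ℝ) 1, fun U f hU hf x hx => ?_⟩
    ext m
    simp [D]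
  | succ k ih =>
    obtain ⟨ι, _, a, Φ, h⟩ := ih
    refine ⟨ι × Bool, inferInstance, fun i => i.2 :: a i.1, fun i =>
      (continuousMultilinearCurryLeftEquiv ℝ (fun _ : Fin (k + 1) => ℝ × ℝ) ℝ).symm
        ((lin (cond i.2 0 1) (cond i.2 1 0)).smulRight (Φ i.1)), fun U f hU hf x hx => ?_⟩
    have hd : HasFDerivAt (iteratedFDeriv ℝ k f)
        (∑ i, (fderiv ℝ (D (a i) f) x).smulRight (Φ i)) x := by
      have h1 : HasFDerivAt (fun y => ∑ i, D (a i) f y • Φ i)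
          (∑ i, (fderiv ℝ (D (a i) f) x).smulRight (Φ i)) x :=
        HasFDerivAt.fun_sum fun i _ => (((hf.D hU (a i)).diff hU hx).hasFDerivAt).smul_const (Φ i)
      refine h1.congr_of_eventuallyEq ?_
      filter_upwards [hU.mem_nhds hx] with y hy using h U f hU hf y hy
    ext m
    rw [iteratedFDeriv_succ_apply_left, hd.fderiv, Fintype.sum_prod_type]
    simp only [sum_apply, smul_apply, ContinuousLinearMap.smulRight_apply,
      continuousMultilinearCurryLeftEquiv_symm_apply]
    refine Finset.sum_congr rfl fun i _ => ?_
    rw [Fintype.sum_bool, fderiv_eq_lin]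
    simp only [lin, D, dir, smul_eq_mul, cond_true, cond_false]
    simp
    ring

lemma iterated_tendsto {g : ℕ → ℝ × ℝ → ℝ} {v : ℝ × ℝ → ℝ} (hU : IsOpen U) (hg : ∀ n, Sm U (g n))
    (hv : Sm U v) (h : ∀ α, TendstoLocallyUniformlyOn (fun n => D α (g n)) (D α v) atTop U)
    (k : ℕ) : TendstoLocallyUniformlyOn (fun n => iteratedFDeriv ℝ k (g n))
      (iteratedFDeriv ℝ k v) atTop U := by
  obtain ⟨ι, _, a, Φ, hΦ⟩ := iterated_eq k
  have key : ∀ s : Finset ι, TendstoLocallyUniformlyOn (fun n x => ∑ i ∈ s, D (a i) (g n) x • Φ i)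
      (fun x => ∑ i ∈ s, D (a i) v x • Φ i) atTop U := by
    classical
    intro s
    induction s using Finset.induction_on with
    | empty =>
      simp only [Finset.sum_empty]
      exact Metric.tendstoLocallyUniformlyOn_iff.2 fun ε hε x _ =>
        ⟨univ, univ_mem, Eventually.of_forall fun n y _ => by simpa using hε⟩
    | insert i s hi ih =>
      simp only [Finset.sum_insert hi]
      exact (tendsto_smul_const (Φ i) (h (a i))).add ih
  refine ((key Finset.univ).congr fun n x hx => ?_).congr_right fun x hx => ?_
  · exact (hΦ U (g n) hU (hg n) x hx).symm
  · exact (hΦ U v hU hv x hx).symm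

end CMC

namespace CMC
open scoped Topology ContDiff

/-! ### The convergence domain and passage to the limit -/

variable {U : Set (ℝ × ℝ)} {f g u : ℝ × ℝ → ℝ} {x z e e' : ℝ × ℝ} {H R C : ℝ}

/-- The real power `(1 + |∇u|²)^{3/2}` is `W³`. -/
lemma isSmooth_iff : IsSmoothCMCSolution H U u ↔ IsSol H U u := by
  have key : ∀ x, (1 + (pdx u x) ^ 2 + (pdy u x) ^ 2) ^ ((3 : ℝ) / 2) = (WW u x) ^ 3 := by
    intro x
    show (VV u x) ^ ((3 : ℝ) / 2) = (√(VV u x)) ^ 3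
    rw [Real.sqrt_eq_rpow, ← Real.rpow_natCast, ← Real.rpow_mul VV_pos.le]
    norm_num
  unfold IsSmoothCMCSolution IsSol
  simp only [key]
  rfl

lemma D_sub_const (c : ℝ) (k : Bool) (α : List Bool) :
    D (k :: α) (fun x => u x - c) = D (k :: α) u := by
  induction α generalizing k with
  | nil => ext x; simp [D, dd, fderiv_sub_const]
  | cons l α ih =>
    show dd (dir k) (D (l :: α) _) = dd (dir k) (D (l :: α) _)
    rw [ih]

lemma Lop_eq_D : Lop u u x = (1 + (D [true] u x) ^ 2) * D [false, false] u x
    - 2 * (D [false] u x) * (D [true] u x) * D [true, false] u x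
    + (1 + (D [false] u x) ^ 2) * D [true, true] u x := rfl

lemma WW_eq_D : WW u x = √(1 + (D [false] u x) ^ 2 + (D [true] u x) ^ 2) := rfl

/-- The equation passes to limits with convergence of the first and second derivatives. -/
lemma isSol_limit {g : ℕ → ℝ × ℝ → ℝ} {v : ℝ × ℝ → ℝ} (hg : ∀ n, IsSol H U (g n)) (hv : Sm U v)
    (h : ∀ α, α ≠ [] → ∀ x ∈ U, Tendsto (fun n => D α (g n) x) atTop (𝓝 (D α v x))) :
    IsSol H U v := by
  refine ⟨hv, fun x hx => ?_⟩
  have p := h [false] (by simp) x hx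
  have q := h [true] (by simp) x hx
  have r := h [false, false] (by simp) x hx
  have s := h [true, false] (by simp) x hx
  have t := h [true, true] (by simp) x hx
  have h1 := ((((q.pow 2).const_add 1).mul r).sub (((p.const_mul 2).mul q).mul s)).add
    (((p.pow 2).const_add 1).mul t)
  have h2 : Tendsto (fun n => 2 * H * (WW (g n) x) ^ 3) atTop (𝓝 (2 * H * (WW v x) ^ 3)) :=
    ((((p.pow 2).const_add 1).add (q.pow 2)).sqrt.pow 3).const_mul (2 * H)
  refine tendsto_nhds_unique h1 (h2.congr fun n => ?_)
  rw [← (hg n).2 x hx]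
  rfl

/-- On the convergence set, derivatives of each positive order are locally bounded. -/
lemma local_bound (hH : 0 < H) (hU : IsOpen U) {u : ℕ → ℝ × ℝ → ℝ} (hu : ∀ n, IsSol H U (u n))
    (hx : x ∈ U) (hB : ∃ M, ∀ n, Wgraph (u n) x ≤ M) (m : ℕ) :
    ∃ r > 0, Metric.ball x r ⊆ U ∧ ∃ B, ∀ n, ∀ y ∈ Metric.ball x r, ∀ β : List Bool,
      1 ≤ β.length → β.length ≤ m + 2 → |D β (u n) y| ≤ B := by
  obtain ⟨M, hM⟩ := hB
  obtain ⟨ρ, hρ, hsub⟩ := Metric.nhds_basis_closedBall.mem_iff.1 (hU.mem_nhds hx)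
  obtain ⟨r, hr, hrρ, C, -, h⟩ := all_orders hH hρ (M ^ 2) m
  refine ⟨r, hr, (Metric.ball_subset_closedBall.trans
    (Metric.closedBall_subset_closedBall hrρ)).trans hsub, C, fun n y hy => ?_⟩
  refine h U (u n) x hU (hu n) hsub ?_ y hy
  have h1 : WW (u n) x ≤ M := hM n
  rw [← WW_sq]
  have := WW_pos (u := u n) (x := x)
  gcongr

/-- The convergence domain is open. -/
lemma isOpen_conv (hH : 0 < H) (hU : IsOpen U) {u : ℕ → ℝ × ℝ → ℝ} (hu : ∀ n, IsSol H U (u n)) :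
    IsOpen {Q ∈ U | ∃ M : ℝ, ∀ n, Wgraph (u n) Q ≤ M} := by
  refine Metric.isOpen_iff.2 fun x hx => ?_
  obtain ⟨r, hr, hsub, B, hB⟩ := local_bound hH hU hu hx.1 hx.2 0
  refine ⟨r, hr, fun y hy => ⟨hsub hy, √(1 + B ^ 2 + B ^ 2), fun n => Real.sqrt_le_sqrt ?_⟩⟩
  have h1 := abs_le.1 (hB n y hy [false] (by simp) (by simp))
  have h2 := abs_le.1 (hB n y hy [true] (by simp) (by simp))
  have h3 : (pdx (u n) y) ^ 2 ≤ B ^ 2 := sq_le_sq' h1.1 h1.2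
  have h4 : (pdy (u n) y) ^ 2 ≤ B ^ 2 := sq_le_sq' h2.1 h2.2
  linarith

/-- On a connected set, locally bounded gradients bound the functions themselves once they are
normalised at a point. -/
lemma LB_normalised {u : ℕ → ℝ × ℝ → ℝ} {P : ℝ × ℝ} (hU : IsOpen U) (hc : IsPreconnected U)
    (hP : P ∈ U) (hu : ∀ n, Sm U (u n)) (h1 : LB U fun n => dd dX (u n))
    (h2 : LB U fun n => dd dY (u n)) : LB U fun n x => u n x - u n P := by
  have key : ∀ x ∈ U, ∃ r > 0, ∃ B, ∀ n, ∀ y ∈ Metric.ball x r, |u n x - u n y| ≤ B := by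
    intro x hx
    obtain ⟨r, hr, -, L, hL, h⟩ := LB.lipschitz hU hu h1 h2 hx
    refine ⟨r, hr, L * r, fun n y hy => (h n x (Metric.mem_ball_self hr) y hy).trans ?_⟩
    rw [Metric.mem_ball, dist_comm] at hy
    gcongr
  have hpt : ∀ x ∈ U, ∃ B, ∀ n, |u n x - u n P| ≤ B := by
    intro x hx
    refine hc.induction₂ (fun x y => ∃ B, ∀ n, |u n x - u n y| ≤ B) (fun x hx => ?_) ?_ ?_ hx hP
    · obtain ⟨r, hr, B, h⟩ := key x hx
      filter_upwards [mem_nhdsWithin_of_mem_nhds (Metric.ball_mem_nhds x hr)] with y hy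
      exact ⟨B, fun n => h n y hy⟩
    · rintro x y z - - - ⟨A, hA⟩ ⟨B, hB⟩
      exact ⟨A + B, fun n => (abs_sub_le _ (u n y) _).trans (add_le_add (hA n) (hB n))⟩
    · rintro x y - - ⟨A, hA⟩
      exact ⟨A, fun n => by rw [abs_sub_comm]; exact hA n⟩
  intro x hx
  obtain ⟨r, hr, A, hA⟩ := key x hx
  obtain ⟨B, hB⟩ := hpt x hx
  refine ⟨r, hr, A + B, fun n y hy => (abs_sub_le _ (u n x) _).trans (add_le_add ?_ (hB n))⟩
  rw [abs_sub_comm]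
  exact hA n y hy

end CMC

/-- on the connected component `C` of the convergence domain containing `P`,
a subsequence of `(u_n - u_n(P))` converges, with all derivatives, to a solution. -/
theorem stmt_4 (H : ℝ) (hH : 0 < H) (Ω : Set (ℝ × ℝ)) (hΩ : IsOpen Ω)
    (hΩconn : IsConnected Ω) (u : ℕ → ℝ × ℝ → ℝ)
    (hu : ∀ n, IsSmoothCMCSolution H Ω (u n))
    (P : ℝ × ℝ) (hP : P ∈ {Q ∈ Ω | ∃ M : ℝ, ∀ n, Wgraph (u n) Q ≤ M}) :
    ∃ φ : ℕ → ℕ, StrictMono φ ∧ ∃ v : ℝ × ℝ → ℝ,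
      IsSmoothCMCSolution H
        (connectedComponentIn {Q ∈ Ω | ∃ M : ℝ, ∀ n, Wgraph (u n) Q ≤ M} P) v ∧
      ∀ k : ℕ, ∀ K : Set (ℝ × ℝ), IsCompact K →
        K ⊆ connectedComponentIn {Q ∈ Ω | ∃ M : ℝ, ∀ n, Wgraph (u n) Q ≤ M} P →
        TendstoUniformlyOn
          (fun n q => iteratedFDeriv ℝ k (fun x => u (φ n) x - u (φ n) P) q)
          (iteratedFDeriv ℝ k v) atTop K := by
  have hs : ∀ n, CMC.IsSol H Ω (u n) := fun n => CMC.isSmooth_iff.1 (hu n)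
  set B := {Q ∈ Ω | ∃ M : ℝ, ∀ n, Wgraph (u n) Q ≤ M} with hB
  set C := connectedComponentIn B P with hC
  have hCo : IsOpen C := (CMC.isOpen_conv hH hΩ hs).connectedComponentIn
  have hPC : P ∈ C := mem_connectedComponentIn hP
  have hCB : C ⊆ B := connectedComponentIn_subset B P
  have hCΩ : C ⊆ Ω := hCB.trans fun x hx => hx.1
  have hsC : ∀ n, CMC.Sm C (u n) := fun n => (hs n).1.mono hCΩ
  have hLB : ∀ k α, CMC.LB C fun n => CMC.D (k :: α) (u n) := by
    intro k α x hx
    obtain ⟨r, hr, -, A, hA⟩ := CMC.local_bound hH hΩ hs (hCΩ hx) (hCB hx).2 α.length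
    exact ⟨r, hr, A, fun n y hy => hA n y hy _ (by simp) (by simp)⟩
  have hg : ∀ n, CMC.Sm C (fun x => u n x - u n P) := fun n => (hsC n).sub (.const _)
  have hLBg : ∀ α, CMC.LB C fun n => CMC.D α fun x => u n x - u n P := by
    intro α
    cases α with
    | nil =>
      exact CMC.LB_normalised hCo isPreconnected_connectedComponentIn hPC hsC
        (hLB false []) (hLB true [])
    | cons k α => simpa only [CMC.D_sub_const] using hLB k α
  obtain ⟨φ, hφ, v, hv, hconv⟩ := CMC.compactness (g := fun n x => u n x - u n P) hCo hg hLBg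
  refine ⟨φ, hφ, v, CMC.isSmooth_iff.2 ?_, fun k K hK hKC => ?_⟩
  · refine CMC.isSol_limit (g := fun n => u (φ n))
      (fun n => ⟨hsC _, fun x hx => (hs _).2 x (hCΩ hx)⟩) hv fun α hα x hx => ?_
    have := (hconv α).tendsto_at hx
    cases α with
    | nil => exact absurd rfl hα
    | cons k α => simpa only [CMC.D_sub_const] using this
  · exact (tendstoLocallyUniformlyOn_iff_forall_isCompact hCo).1
      (CMC.iterated_tendsto hCo (fun n => hg (φ n)) hv hconv k) K hKC hK
end
end

section
/- Let H > 0, let Ω ⊆ ℝ² be an open connected set, let (u_n) be a sequence of solutions of (CMC) on Ω, and let C be a divergence line of (u_n), with center z₀ and with strictly increasing φ : ℕ → ℕ such that N_{u_{φ(n)}}(Q) → (ν(Q), 0) for all Q ∈ C, where ν(Q) = 2H(z₀ − Q). Let γ : [0, L] → C be an arclength parametrization of a compact subarc T of C oriented so that det(ν(γ(s)), γ'(s)) > 0 (the pair (ν(γ(s)), γ'(s)) is a direct orthonormal basis). Then lim_{n→∞} ∫_T ω_{u_{φ(n)}} = −L, i.e. lim_{n→∞} ∫_0^L (∂_x u_{φ(n)}(γ(s))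 γ₂'(s) − ∂_y u_{φ(n)}(γ(s)) γ₁'(s))/W_{u_{φ(n)}}(γ(s)) ds = −L. -/
/-!
Write `ν = 2H(z₀ - γ)`. The integrand at `s` is `-det(N, γ')`, with `N` the horizontal part of the unit
normal, so it is bounded by `1` in absolute value (Cauchy-Schwarz, `abs_omega_le_one`) and converges
pointwise to `-det(ν, γ')`. Since `γ` stays on a circle centred at `z₀`, the unit vectors `ν` and `γ'`
are orthogonal, and the orientation hypothesis forces `det(ν, γ') = 1` (`det_eq_one`). Dominated
convergence on `[0, L]` gives the limit `-L`; measurability holds because `∂ₓu`, `∂ᵧu` are continuous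
on `Ω` and `γ'` agrees with the measurable function `deriv γ` on `[0, L]`.
-/

open Real MeasureTheory Filter Set

noncomputable section

lemma Wgraph_pos (u : ℝ × ℝ → ℝ) (p : ℝ × ℝ) : 0 < Wgraph u p :=
  Real.sqrt_pos.2 (by positivity)

lemma sq_add_sq_of_enorm2 {p : ℝ × ℝ} {r : ℝ} (h : enorm2 p = r) :
    p.1 ^ 2 + p.2 ^ 2 = r ^ 2 := by
  rw [← h, enorm2, Real.sq_sqrt (by positivity)]

/-- The form `ω_u` has comass at most one: its value on a unit vector lies in `[-1, 1]`. -/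
lemma abs_omega_le_one (u : ℝ × ℝ → ℝ) (p v : ℝ × ℝ) (hv : enorm2 v = 1) :
    |(pdx u p * v.2 - pdy u p * v.1) / Wgraph u p| ≤ 1 := by
  have hW := Wgraph_pos u p
  have hv2 := sq_add_sq_of_enorm2 hv
  rw [abs_div, abs_of_pos hW, div_le_one hW]
  refine Real.abs_le_sqrt ?_
  have key : (pdx u p * v.2 - pdy u p * v.1) ^ 2 + (pdx u p * v.1 + pdy u p * v.2) ^ 2
      = ((pdx u p) ^ 2 + (pdy u p) ^ 2) * (v.1 ^ 2 + v.2 ^ 2) := by ring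
  rw [hv2] at key
  nlinarith [sq_nonneg (pdx u p * v.1 + pdy u p * v.2)]

/-- Two orthogonal unit vectors of the plane with positive determinant have determinant one. -/
lemma det_eq_one {a b c d : ℝ} (h1 : a ^ 2 + b ^ 2 = 1) (h2 : c ^ 2 + d ^ 2 = 1)
    (h0 : a * c + b * d = 0) (hpos : 0 < a * d - b * c) : a * d - b * c = 1 := by
  have key : (a * d - b * c) ^ 2 = 1 := by
    have : (a * d - b * c) ^ 2 + (a * c + b * d) ^ 2 = (a ^ 2 + b ^ 2) * (c ^ 2 + d ^ 2) := by ring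
    rw [h1, h2, h0] at this
    linarith
  nlinarith

/-- A curve which stays on a circle near `s` has velocity orthogonal to the radius at `s`. -/
lemma radius_dot_velocity_eq_zero {γ : ℝ → ℝ × ℝ} {v z : ℝ × ℝ} {s r : ℝ}
    (hd : HasDerivAt γ v s) (hc : ∀ᶠ t in nhds s, enorm2 (γ t - z) = r) :
    (z.1 - (γ s).1) * v.1 + (z.2 - (γ s).2) * v.2 = 0 := by
  have h1 : HasDerivAt (fun t => (γ t).1) v.1 s :=
    (hasFDerivAt_fst (p := γ s)).comp_hasDerivAt s hd
  have h2 : HasDerivAt (fun t => (γ t).2) v.2 s :=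
    (hasFDerivAt_snd (p := γ s)).comp_hasDerivAt s hd
  have h3 := ((h1.sub_const z.1).pow 2).add ((h2.sub_const z.2).pow 2)
  have h4 := (hasDerivAt_const s (r ^ 2)).congr_of_eventuallyEq
    (f₁ := (fun t => (γ t).1 - z.1) ^ 2 + (fun t => (γ t).2 - z.2) ^ 2)
    (hc.mono fun t ht => by simpa using sq_add_sq_of_enorm2 ht)
  have h5 := h3.unique h4
  norm_num at h5
  linarith

/-- along a divergence line, for a positively oriented arclength parametrized
compact subarc `T = γ([0,L])`, the integrals of the 1-forms `ω_{u_{φ(n)}}` converge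
to `-L = -ℓ(T)`. -/
theorem stmt_8 (H : ℝ) (hH : 0 < H) (Ω : Set (ℝ × ℝ)) (hΩ : IsOpen Ω)
    (hΩconn : IsConnected Ω) (u : ℕ → ℝ × ℝ → ℝ)
    (hu : ∀ n, IsCMCSolution H Ω (u n))
    (C : Set (ℝ × ℝ)) (z₀ : ℝ × ℝ) (φ : ℕ → ℕ) (hφ : StrictMono φ)
    (hCΩ : C ⊆ Ω) (hCcirc : ∀ q ∈ C, enorm2 (q - z₀) = 1 / (2 * H))
    (hCconn : IsConnected C) (hCnt : C.Nontrivial)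
    (hconv : ∀ Q ∈ C, Tendsto (fun n => normalVec (u (φ n)) Q) atTop
      (nhds (2 * H * (z₀.1 - Q.1), 2 * H * (z₀.2 - Q.2), (0 : ℝ))))
    (L : ℝ) (hL : 0 < L) (γ γ' : ℝ → ℝ × ℝ)
    (hγC : ∀ s ∈ Set.Icc (0 : ℝ) L, γ s ∈ C)
    (hderiv : ∀ s ∈ Set.Icc (0 : ℝ) L, HasDerivAt γ (γ' s) s)
    (hunit : ∀ s ∈ Set.Icc (0 : ℝ) L, enorm2 (γ' s) = 1)
    (horient : ∀ s ∈ Set.Icc (0 : ℝ) L,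
      0 < (2 * H * (z₀.1 - (γ s).1)) * (γ' s).2
          - (2 * H * (z₀.2 - (γ s).2)) * (γ' s).1) :
    Tendsto (fun n => ∫ s in (0 : ℝ)..L,
        (pdx (u (φ n)) (γ s) * (γ' s).2 - pdy (u (φ n)) (γ s) * (γ' s).1)
          / Wgraph (u (φ n)) (γ s))
      atTop (nhds (-L)) := by
  have hcont (n : ℕ) : ContinuousOn (fun p => fderiv ℝ (u n) p) Ω :=
    (hu n).1.continuousOn_fderiv_of_isOpen hΩ (by norm_num)
  have hγcont : ContinuousOn γ (Set.Icc 0 L) :=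
    fun s hs => (hderiv s hs).continuousAt.continuousWithinAt
  have hmaps : MapsTo γ (Set.Icc 0 L) Ω := fun s hs => hCΩ (hγC s hs)
  have hsub : Set.uIoc 0 L ⊆ Set.Icc 0 L := by
    rw [Set.uIoc_of_le hL.le]; exact Set.Ioc_subset_Icc_self
  have hlim : (-L) = ∫ _ in (0 : ℝ)..L, (-1 : ℝ) := by simp
  rw [hlim]
  refine intervalIntegral.tendsto_integral_filter_of_dominated_convergence (fun _ => 1)
    (Eventually.of_forall fun n => ?_) (Eventually.of_forall fun n => ?_) (by simp) ?_
  · have hx : ContinuousOn (fun s => pdx (u (φ n)) (γ s)) (Set.Icc 0 L) :=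
      ((hcont (φ n)).comp hγcont hmaps).clm_apply continuousOn_const
    have hy : ContinuousOn (fun s => pdy (u (φ n)) (γ s)) (Set.Icc 0 L) :=
      ((hcont (φ n)).comp hγcont hmaps).clm_apply continuousOn_const
    have hW : ContinuousOn (fun s => Wgraph (u (φ n)) (γ s)) (Set.Icc 0 L) :=
      ((continuousOn_const.add (hx.pow 2)).add (hy.pow 2)).sqrt
    have hmeas {f : ℝ → ℝ} (hf : ContinuousOn f (Set.Icc 0 L)) :
        AEMeasurable f (volume.restrict (Set.uIoc 0 L)) :=
      (hf.mono hsub).aemeasurable measurableSet_uIoc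
    have hd : Measurable (deriv γ) := measurable_deriv γ
    refine AEStronglyMeasurable.congr
      (f := fun s => (pdx (u (φ n)) (γ s) * (deriv γ s).2 - pdy (u (φ n)) (γ s) * (deriv γ s).1)
          / Wgraph (u (φ n)) (γ s)) ?_ ?_
    · exact ((((hmeas hx).mul hd.snd.aemeasurable).sub
        ((hmeas hy).mul hd.fst.aemeasurable)).div (hmeas hW)).aestronglyMeasurable
    · filter_upwards [ae_restrict_mem measurableSet_uIoc] with s hs
      rw [(hderiv s (hsub hs)).deriv]
  · exact Eventually.of_forall fun s hs => abs_omega_le_one _ _ _ (hunit s (hsub hs))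
  · -- The endpoint `L` is discarded so that `γ` lies on the circle on a full neighbourhood of `s`.
    filter_upwards [compl_mem_ae_iff.2 (measure_singleton (μ := volume) L)] with s hsL hs
    have hsI := hsub hs
    have hs0 : 0 < s := by rw [Set.uIoc_of_le hL.le] at hs; exact hs.1
    have hsL' : s < L := lt_of_le_of_ne hsI.2 hsL
    have horth := radius_dot_velocity_eq_zero (hderiv s hsI)
      (Filter.mem_of_superset (Icc_mem_nhds hs0 hsL') fun t ht => hCcirc _ (hγC t ht))
    have hrad := sq_add_sq_of_enorm2 (hCcirc _ (hγC s hsI))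
    have hνunit : (2 * H * (z₀.1 - (γ s).1)) ^ 2 + (2 * H * (z₀.2 - (γ s).2)) ^ 2 = 1 := by
      have : (2 * H * (z₀.1 - (γ s).1)) ^ 2 + (2 * H * (z₀.2 - (γ s).2)) ^ 2
          = (2 * H) ^ 2 * ((γ s - z₀).1 ^ 2 + (γ s - z₀).2 ^ 2) := by
        simp only [Prod.fst_sub, Prod.snd_sub]; ring
      rw [this, hrad]
      field_simp
    have hdet := det_eq_one hνunit (by simpa using sq_add_sq_of_enorm2 (hunit s hsI))
      (by linear_combination (2 * H) * horth) (horient s hsI)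
    have hN := hconv _ (hγC s hsI)
    have hN1 := hN.fst_nhds
    have hN2 := hN.snd_nhds.fst_nhds
    have hF := ((hN1.mul_const (γ' s).2).sub (hN2.mul_const (γ' s).1)).neg
    rw [hdet] at hF
    refine hF.congr fun n => ?_
    simp only [normalVec]
    ring
end
end
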